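/- arXiv:1704.04191 — 7 statements merged into one kernel-verified Lean document; each statement's English description precedes it below -/
import Mathlib

section
/- Let f : ℝⁿ → ℝᵐ be strictly differentiable at x̄ with derivative Df(x̄) and Jacobian matrix ∇f(x̄). Then, for every u ∈ ℝᵐ, the coderivative of f at x̄ for f(x̄) is the singleton D*f(x̄ | f(x̄))(u) = { ∇f(x̄)ᵀ u }. -/
open Filter Topology Set Metric RealInnerProductSpace
open scoped ENNReal NNReal Pointwise

noncomputable section

/-- Graph of a set-valued map. -/
def svGraph {α β : Type*} (F : α → Set β) : Set (α × β) := {p | p.2 ∈ F p.1}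

/-- Inverse of a set-valued map. -/
def svInv {α β : Type*} (F : α → Set β) : β → Set α := fun y => {x | y ∈ F x}

/-- Local closedness of a set at a point of a metric space. -/
def LocClosedAt {α : Type*} [PseudoMetricSpace α] (s : Set α) (p : α) : Prop :=
  ∃ r : ℝ, 0 < r ∧ IsClosed (s ∩ Metric.closedBall p r)

section Cones

variable {X : Type*} [NormedAddCommGroup X] [NormedSpace ℝ X]

/-- Bouligand-Severi contingent cone. -/
def contingentCone (Ω : Set X) (x : X) : Set X :=
  { u | ∃ (t : ℕ → ℝ) (uk : ℕ → X), (∀ k, 0 < t k) ∧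
      Tendsto t atTop (𝓝 0) ∧ Tendsto uk atTop (𝓝 u) ∧ ∀ k, x + t k • uk k ∈ Ω }

/-- Bouligand paratingent cone. -/
def paratingentCone (Ω : Set X) (x : X) : Set X :=
  { u | ∃ (t : ℕ → ℝ) (uk : ℕ → X) (xk : ℕ → X), (∀ k, 0 < t k) ∧
      Tendsto t atTop (𝓝 0) ∧ Tendsto uk atTop (𝓝 u) ∧
      (∀ k, xk k ∈ Ω) ∧ Tendsto xk atTop (𝓝 x) ∧ ∀ k, xk k + t k • uk k ∈ Ω }

end Cones

section NormalCones

variable {X : Type*} [NormedAddCommGroup X] [InnerProductSpace ℝ X]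

/-- Fréchet (regular) normal cone. -/
def frechetNormalCone (Ω : Set X) (x : X) : Set X :=
  { v | ∀ ε : ℝ, 0 < ε → ∃ δ : ℝ, 0 < δ ∧ ∀ y ∈ Ω, ‖y - x‖ < δ →
      ⟪v, y - x⟫ ≤ ε * ‖y - x‖ }

/-- Limiting (Mordukhovich) normal cone. -/
def limitingNormalCone (Ω : Set X) (x : X) : Set X :=
  { v | ∃ (xk : ℕ → X) (vk : ℕ → X), (∀ k, xk k ∈ Ω) ∧
      Tendsto xk atTop (𝓝 x) ∧ Tendsto vk atTop (𝓝 v) ∧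
      ∀ k, vk k ∈ frechetNormalCone Ω (xk k) }

end NormalCones

section Derivatives

variable {E F : Type*} [NormedAddCommGroup E] [NormedSpace ℝ E]
  [NormedAddCommGroup F] [NormedSpace ℝ F]

/-- Graphical derivative. -/
def gDeriv (Fm : E → Set F) (x : E) (y : F) : E → Set F := fun u =>
  {v | (u, v) ∈ contingentCone (svGraph Fm) (x, y)}

/-- Strict graphical derivative. -/
def sgDeriv (Fm : E → Set F) (x : E) (y : F) : E → Set F := fun u =>
  {v | (u, v) ∈ paratingentCone (svGraph Fm) (x, y)}

end Derivatives

section Coderivative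

variable {E F : Type*} [NormedAddCommGroup E] [InnerProductSpace ℝ E]
  [NormedAddCommGroup F] [InnerProductSpace ℝ F]

/-- Coderivative: `w ∈ D*F(x|y)(z)` iff `(w, -z)` is in the limiting normal cone
to the graph of `F` (viewed inside the `ℓ²` product) at `(x, y)`. -/
def coDeriv (Fm : E → Set F) (x : E) (y : F) : F → Set E := fun z =>
  { w | (WithLp.equiv 2 (E × F)).symm (w, -z) ∈
      limitingNormalCone ((WithLp.equiv 2 (E × F)).symm '' svGraph Fm)
        ((WithLp.equiv 2 (E × F)).symm (x, y)) }

end Coderivative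

section Norms

variable {E F : Type*} [NormedAddCommGroup E] [NormedAddCommGroup F]

/-- Outer norm of a (positively homogeneous) set-valued map. -/
def outerNormSV (H : E → Set F) : ℝ≥0∞ :=
  ⨆ (x : E) (_ : ‖x‖ ≤ 1) (y : F) (_ : y ∈ H x), (‖y‖₊ : ℝ≥0∞)

/-- Inner norm of a (positively homogeneous) set-valued map. -/
def innerNormSV (H : E → Set F) : ℝ≥0∞ :=
  ⨆ (x : E) (_ : ‖x‖ ≤ 1), ⨅ (y : F) (_ : y ∈ H x), (‖y‖₊ : ℝ≥0∞)

/-- Positive homogeneity of a set-valued map. -/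
def PosHomogeneous {E F : Type*} [NormedAddCommGroup E] [NormedSpace ℝ E]
    [NormedAddCommGroup F] [NormedSpace ℝ F] (H : E → Set F) : Prop :=
  (0 : F) ∈ H 0 ∧ ∀ (c : ℝ), 0 < c → ∀ x, H (c • x) = c • (H x)

end Norms

section Stability

variable {E F : Type*} [NormedAddCommGroup E] [NormedAddCommGroup F]

/-- Metric regularity with constant `κ`. -/
def MetrRegWith (κ : ℝ≥0) (Fm : E → Set F) (xbar : E) (ybar : F) : Prop :=
  ∃ U ∈ 𝓝 xbar, ∃ V ∈ 𝓝 ybar, ∀ x ∈ U, ∀ y ∈ V,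
    EMetric.infEdist x (svInv Fm y) ≤ (κ : ℝ≥0∞) * EMetric.infEdist y (Fm x)

/-- The regularity modulus `reg (F; xbar|ybar)`. -/
def regMod (Fm : E → Set F) (xbar : E) (ybar : F) : ℝ≥0∞ :=
  ⨅ (κ : ℝ≥0) (_ : MetrRegWith κ Fm xbar ybar), (κ : ℝ≥0∞)

/-- Aubin property with constant `κ`. -/
def AubinWith (κ : ℝ≥0) (S : F → Set E) (ybar : F) (xbar : E) : Prop :=
  ∃ V ∈ 𝓝 ybar, ∃ U ∈ 𝓝 xbar, ∀ y ∈ V, ∀ y' ∈ V, ∀ x ∈ S y' ∩ U,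
    ∃ x' ∈ S y, ‖x - x'‖ ≤ (κ : ℝ) * ‖y - y'‖

/-- The Lipschitz modulus `lip (S; ybar|xbar)`. -/
def lipMod (S : F → Set E) (ybar : F) (xbar : E) : ℝ≥0∞ :=
  ⨅ (κ : ℝ≥0) (_ : AubinWith κ S ybar xbar), (κ : ℝ≥0∞)

/-- Strong metric subregularity with constant `κ`. -/
def SubregWith (κ : ℝ≥0) (Fm : E → Set F) (xbar : E) (ybar : F) : Prop :=
  ∃ U ∈ 𝓝 xbar, ∀ x ∈ U, (‖x - xbar‖₊ : ℝ≥0∞) ≤ (κ : ℝ≥0∞) * EMetric.infEdist ybar (Fm x)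

/-- The subregularity modulus `subreg (F; xbar|ybar)`. -/
def subregMod (Fm : E → Set F) (xbar : E) (ybar : F) : ℝ≥0∞ :=
  ⨅ (κ : ℝ≥0) (_ : SubregWith κ Fm xbar ybar), (κ : ℝ≥0∞)

/-- Isolated calmness with constant `κ`. -/
def CalmWith (κ : ℝ≥0) (S : F → Set E) (ybar : F) (xbar : E) : Prop :=
  ∃ V ∈ 𝓝 ybar, ∃ U ∈ 𝓝 xbar, ∀ y ∈ V, ∀ x ∈ S y ∩ U, ‖x - xbar‖ ≤ (κ : ℝ) * ‖y - ybar‖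

/-- The calmness modulus `clm (S; ybar|xbar)`. -/
def clmMod (S : F → Set E) (ybar : F) (xbar : E) : ℝ≥0∞ :=
  ⨅ (κ : ℝ≥0) (_ : CalmWith κ S ybar xbar), (κ : ℝ≥0∞)

/-- Strong metric regularity: metric regularity plus a single-valued localization
of the inverse. -/
def StrongMetrReg (Fm : E → Set F) (xbar : E) (ybar : F) : Prop :=
  (∃ κ : ℝ≥0, MetrRegWith κ Fm xbar ybar) ∧
  ∃ U ∈ 𝓝 xbar, ∃ V ∈ 𝓝 ybar, ∀ y ∈ V, (svInv Fm y ∩ U).Subsingleton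

end Stability

section CoderivativeOfStrictDeriv

variable {E F : Type*} [NormedAddCommGroup E] [NormedAddCommGroup F]

lemma withLp_prod_norm_le_add (p : WithLp 2 (E × F)) : ‖p‖ ≤ ‖p.fst‖ + ‖p.snd‖ := by
  refine abs_le_of_sq_le_sq' ?_ (by positivity) |>.2
  rw [WithLp.prod_norm_sq_eq_of_L2]
  nlinarith [norm_nonneg p.fst, norm_nonneg p.snd]

variable [InnerProductSpace ℝ E] [InnerProductSpace ℝ F] [CompleteSpace E]
  [CompleteSpace F]

/-- If `f` is approximated by `A` up to the constant `c` near `x`, then every Fréchet normal `v` to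
the graph of `f` at `(x, f x)` satisfies `‖v.fst + A† v.snd‖ ≤ c ‖v.snd‖`. -/
lemma ApproximatesLinearOn.norm_fst_add_adjoint_snd_le {f : E → F} {A : E →L[ℝ] F} {s : Set E}
    {c : ℝ≥0} (hf : ApproximatesLinearOn f A s c) {x : E} (hs : s ∈ 𝓝 x)
    {v : WithLp 2 (E × F)}
    (hv : v ∈ frechetNormalCone ((WithLp.equiv 2 (E × F)).symm '' svGraph fun x => {f x})
      ((WithLp.equiv 2 (E × F)).symm (x, f x))) :
    ‖v.fst + ContinuousLinearMap.adjoint A v.snd‖ ≤ c * ‖v.snd‖ := by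
  set w := v.fst + ContinuousLinearMap.adjoint A v.snd with hw
  set K : ℝ := 1 + ‖A‖ + c with hK
  have hKpos : 0 < K := by positivity
  rcases eq_or_ne w 0 with h0 | h0
  · rw [h0, norm_zero]; positivity
  have hwpos : 0 < ‖w‖ := norm_pos_iff.2 h0
  refine le_of_forall_pos_le_add fun η hη => ?_
  obtain ⟨δ, hδ, H⟩ := hv (η / K) (by positivity)
  have hlim : Tendsto (fun t : ℝ => x + t • w) (𝓝[>] 0) (𝓝 x) := by
    have : Tendsto (fun t : ℝ => x + t • w) (𝓝 0) (𝓝 (x + (0 : ℝ) • w)) :=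
      Continuous.tendsto (by fun_prop) 0
    rw [zero_smul, add_zero] at this
    exact this.mono_left nhdsWithin_le_nhds
  have hball : Metric.ball x (δ / K) ∈ 𝓝 x := Metric.ball_mem_nhds _ (by positivity)
  obtain ⟨t, ⟨hts, htb⟩, ht⟩ :=
    (((hlim.eventually hs).and (hlim.eventually hball)).and self_mem_nhdsWithin).exists
  have ht : 0 < t := ht
  set h := t • w with hh
  have hhn : ‖h‖ = t * ‖w‖ := by rw [hh, norm_smul, Real.norm_of_nonneg ht.le]
  have happ : ‖f (x + h) - f x - A h‖ ≤ c * ‖h‖ := by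
    simpa using hf (x + h) hts x (mem_of_mem_nhds hs)
  have hΔ : ‖f (x + h) - f x‖ ≤ (‖A‖ + c) * ‖h‖ := by
    have h1 := norm_add_le (f (x + h) - f x - A h) (A h)
    rw [sub_add_cancel] at h1
    linarith [A.le_opNorm h]
  have hnorm : ‖(WithLp.equiv 2 (E × F)).symm (x + h, f (x + h)) -
      (WithLp.equiv 2 (E × F)).symm (x, f x)‖ ≤ K * ‖h‖ := by
    refine (withLp_prod_norm_le_add _).trans ?_
    simp only [WithLp.sub_fst, WithLp.sub_snd, WithLp.equiv_symm_apply, WithLp.toLp_fst,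
      WithLp.toLp_snd, add_sub_cancel_left]
    rw [hK]; linarith
  have hlt : ‖h‖ < δ / K := by simpa [Metric.mem_ball, dist_eq_norm] using htb
  have hin := H _ ⟨(x + h, f (x + h)), rfl, rfl⟩
    (hnorm.trans_lt (by rwa [lt_div_iff₀' hKpos] at hlt))
  have hin' := hin.trans (mul_le_mul_of_nonneg_left hnorm (by positivity))
  simp only [WithLp.prod_inner_apply, WithLp.equiv_symm_apply, WithLp.ofLp_sub, Prod.fst_sub,
    Prod.snd_sub, add_sub_cancel_left] at hin'
  have hwh : ⟪w, h⟫ = ⟪v.fst, h⟫ + ⟪v.snd, f (x + h) - f x⟫ - ⟪v.snd, f (x + h) - f x - A h⟫ := by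
    rw [hw, inner_add_left, ContinuousLinearMap.adjoint_inner_left, inner_sub_right _ _ (A h)]
    ring
  have hcs : -⟪v.snd, f (x + h) - f x - A h⟫ ≤ ‖v.snd‖ * (c * ‖h‖) :=
    (neg_le_abs _).trans ((abs_real_inner_le_norm _ _).trans (by gcongr))
  have hww : ⟪w, h⟫ = ‖h‖ * ‖w‖ := by
    rw [hhn, hh, inner_smul_right, real_inner_self_eq_norm_sq]; ring
  have hKη : η / K * (K * ‖h‖) = η * ‖h‖ := by field_simp
  have hhpos : 0 < ‖h‖ := by rw [hhn]; positivity
  refine le_of_mul_le_mul_left ?_ hhpos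
  have : ⟪v.fst, h⟫ + ⟪v.snd, f (x + h) - f x⟫ ≤ η * ‖h‖ := hKη ▸ hin'
  nlinarith

/-- The pair `(A† u, -u)` is a Fréchet normal to the graph of a map with derivative `A`. -/
lemma HasFDerivAt.adjoint_mem_frechetNormalCone {f : E → F} {A : E →L[ℝ] F} {x : E}
    (hf : HasFDerivAt f A x) (u : F) :
    (WithLp.equiv 2 (E × F)).symm (ContinuousLinearMap.adjoint A u, -u) ∈
      frechetNormalCone ((WithLp.equiv 2 (E × F)).symm '' svGraph fun x => {f x})
        ((WithLp.equiv 2 (E × F)).symm (x, f x)) := by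
  intro ε hε
  obtain ⟨δ, hδ, H⟩ := Metric.eventually_nhds_iff.1
    (hf.isLittleO.def (show 0 < ε / (‖u‖ + 1) by positivity))
  refine ⟨δ, hδ, ?_⟩
  rintro _ ⟨⟨y, z⟩, hz, rfl⟩ hy
  obtain rfl : z = f y := hz
  have hyx : ‖y - x‖ ≤ _ := WithLp.norm_fst_le _ ((WithLp.equiv 2 (E × F)).symm (y, f y) -
    (WithLp.equiv 2 (E × F)).symm (x, f x))
  have happ := H (y := y) (by rw [dist_eq_norm]; exact hyx.trans_lt hy)
  calc _ = -⟪u, f y - f x - A (y - x)⟫ := by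
        simp only [WithLp.prod_inner_apply, WithLp.equiv_symm_apply, WithLp.ofLp_sub, Prod.fst_sub,
          Prod.snd_sub, ContinuousLinearMap.adjoint_inner_left, inner_neg_left]
        rw [inner_sub_right _ _ (A (y - x))]
        ring
    _ ≤ ‖u‖ * (ε / (‖u‖ + 1) * ‖y - x‖) :=
        (neg_le_abs _).trans ((abs_real_inner_le_norm _ _).trans (by gcongr))
    _ ≤ (‖u‖ + 1) * (ε / (‖u‖ + 1) * ‖y - x‖) := by gcongr; linarith
    _ = ε * ‖y - x‖ := by field_simp
    _ ≤ _ := by gcongr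

/-- Coderivative of a strictly differentiable map between Hilbert spaces. -/
theorem HasStrictFDerivAt.coDeriv_eq {f : E → F} {A : E →L[ℝ] F} {x : E}
    (hf : HasStrictFDerivAt f A x) (u : F) :
    coDeriv (fun x => {f x}) x (f x) u = {ContinuousLinearMap.adjoint A u} := by
  ext w
  constructor
  · rintro ⟨p, v, hp, hpx, hvw, hv⟩
    have hpx' : Tendsto (fun k => (p k).fst) atTop (𝓝 x) :=
      ((WithLp.prod_continuous_ofLp 2 E F).fst.tendsto _).comp hpx
    have hv1 : Tendsto (fun k => (v k).fst) atTop (𝓝 w) :=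
      ((WithLp.prod_continuous_ofLp 2 E F).fst.tendsto _).comp hvw
    have hv2 : Tendsto (fun k => (v k).snd) atTop (𝓝 (-u)) :=
      ((WithLp.prod_continuous_ofLp 2 E F).snd.tendsto _).comp hvw
    have key : ∀ c : ℝ≥0, 0 < c → ‖w + ContinuousLinearMap.adjoint A (-u)‖ ≤ c * ‖-u‖ := by
      intro c hc
      obtain ⟨s, hs, happ⟩ := hf.approximates_deriv_on_nhds (Or.inr hc)
      refine le_of_tendsto_of_tendsto
        (hv1.add (((ContinuousLinearMap.adjoint A).continuous.tendsto _).comp hv2)).norm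
        (hv2.norm.const_mul (c : ℝ)) ?_
      filter_upwards [hpx'.eventually (eventually_mem_nhds_iff.2 hs)] with k hk
      obtain ⟨⟨y, z⟩, hz, hyz⟩ := hp k
      obtain rfl : z = f y := hz
      have hvk := hv k
      rw [← hyz] at hk hvk
      exact happ.norm_fst_add_adjoint_snd_le hk hvk
    have hle : ‖w + ContinuousLinearMap.adjoint A (-u)‖ ≤ 0 := by
      refine le_of_forall_pos_le_add fun η hη => ?_
      refine (key ⟨η / (‖-u‖ + 1), by positivity⟩
        (show (0 : ℝ) < η / (‖-u‖ + 1) by positivity)).trans ?_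
      change η / (‖-u‖ + 1) * ‖-u‖ ≤ 0 + η
      rw [zero_add, div_mul_eq_mul_div, div_le_iff₀ (by positivity)]
      nlinarith
    rw [norm_le_zero_iff, map_neg, ← sub_eq_add_neg, sub_eq_zero] at hle
    exact hle
  · rintro rfl
    exact ⟨fun _ => _, fun _ => _, fun _ => ⟨(x, f x), rfl, rfl⟩, tendsto_const_nhds,
      tendsto_const_nhds, fun _ => hf.hasFDerivAt.adjoint_mem_frechetNormalCone u⟩

end CoderivativeOfStrictDeriv

/-- Coderivative of a strictly differentiable map: `D*f(xbar|f xbar)(u) = {∇f(xbar)ᵀ u}`. -/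
theorem coDeriv_of_strictly_differentiable {n m : ℕ}
    (f : EuclideanSpace ℝ (Fin n) → EuclideanSpace ℝ (Fin m))
    (xbar : EuclideanSpace ℝ (Fin n))
    (A : EuclideanSpace ℝ (Fin n) →L[ℝ] EuclideanSpace ℝ (Fin m))
    (hf : HasStrictFDerivAt f A xbar) (u : EuclideanSpace ℝ (Fin m)) :
    coDeriv (fun x => {f x}) xbar (f xbar) u = {ContinuousLinearMap.adjoint A u} :=
  hf.coDeriv_eq u

end
end

section
/- Let f : ℝⁿ → ℝᵐ be strictly differentiable at x, let F : ℝⁿ ⇉ ℝᵐ be a set-valued map, and let y ∈ F(x). Then for every u ∈ ℝⁿ, D̃(f + F)(x | f(x) + y)(u) = Df(x)u + D̃F(x|y)(u), where f + F denotes the set-valued map z ↦ { f(z) + w : w ∈ F(z) }. -/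
open Filter Topology Set Metric RealInnerProductSpace
open scoped ENNReal NNReal Pointwise

noncomputable section

section SumRule

variable {E F : Type*} [NormedAddCommGroup E] [NormedSpace ℝ E]
  [NormedAddCommGroup F] [NormedSpace ℝ F]

/-- Difference quotients of a strictly differentiable function along moving base points
converge to the directional derivative. -/
theorem HasStrictFDerivAt.tendsto_inv_smul_sub {f : E → F} {A : E →L[ℝ] F} {x u : E}
    (hf : HasStrictFDerivAt f A x) {t : ℕ → ℝ} {uk xk : ℕ → E} (ht : ∀ k, 0 < t k)
    (ht0 : Tendsto t atTop (𝓝 0)) (hu : Tendsto uk atTop (𝓝 u))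
    (hx : Tendsto xk atTop (𝓝 x)) :
    Tendsto (fun k => (t k)⁻¹ • (f (xk k + t k • uk k) - f (xk k))) atTop (𝓝 (A u)) := by
  have hmove : Tendsto (fun k => xk k + t k • uk k) atTop (𝓝 x) := by
    simpa using hx.add (ht0.smul hu)
  have hrem : (fun k => f (xk k + t k • uk k) - f (xk k) - A (t k • uk k)) =o[atTop] t := by
    have h := hf.isLittleO.comp_tendsto (hmove.prodMk_nhds hx)
    have hO : (fun k => t k • uk k) =O[atTop] t := by
      simpa using (Asymptotics.isBigO_refl t atTop).smul (hu.isBigO_one ℝ)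
    refine Asymptotics.IsLittleO.trans_isBigO ?_ hO
    simpa [Function.comp_def] using h
  have hzero := hrem.tendsto_inv_smul_nhds_zero
  have hA : Tendsto (fun k => A (uk k)) atTop (𝓝 (A u)) := (A.continuous.tendsto u).comp hu
  have hsum := hzero.add hA
  rw [zero_add] at hsum
  refine hsum.congr fun k => ?_
  rw [map_smul, smul_sub, inv_smul_smul₀ (ht k).ne', sub_add_cancel]

/-- Adding a strictly differentiable function shifts strict graphical derivatives by its
derivative. -/
theorem add_mem_sgDeriv_of_hasStrictFDerivAt {f : E → F} {A : E →L[ℝ] F} {x u : E} {y v : F}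
    {Fm : E → Set F} (hf : HasStrictFDerivAt f A x) (hv : v ∈ sgDeriv Fm x y u) :
    A u + v ∈ sgDeriv (fun z => (f z + ·) '' Fm z) x (f x + y) u := by
  obtain ⟨t, w, p, ht, ht0, hw, hp, hpx, hpw⟩ := hv
  have hw₁ : Tendsto (fun k => (w k).1) atTop (𝓝 u) := hw.fst_nhds
  have hw₂ : Tendsto (fun k => (w k).2) atTop (𝓝 v) := hw.snd_nhds
  have hp₁ : Tendsto (fun k => (p k).1) atTop (𝓝 x) := hpx.fst_nhds
  have hp₂ : Tendsto (fun k => (p k).2) atTop (𝓝 y) := hpx.snd_nhds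
  refine ⟨t, fun k => ((w k).1,
      (t k)⁻¹ • (f ((p k).1 + t k • (w k).1) - f (p k).1) + (w k).2),
    fun k => ((p k).1, f (p k).1 + (p k).2), ht, ht0,
    hw₁.prodMk_nhds ((hf.tendsto_inv_smul_sub ht ht0 hw₁ hp₁).add hw₂),
    fun k => ⟨(p k).2, hp k, rfl⟩,
    hp₁.prodMk_nhds (((hf.continuousAt.tendsto).comp hp₁).add hp₂),
    fun k => ⟨(p k).2 + t k • (w k).2, hpw k, ?_⟩⟩
  simp only [Prod.smul_mk, Prod.mk_add_mk, smul_add, smul_inv_smul₀ (ht k).ne']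
  abel

end SumRule

/-- Sum rule for strict graphical derivatives:
`D̃(f+F)(x | f x + y)(u) = Df(x)u + D̃F(x|y)(u)`. -/
theorem sgDeriv_sum_rule {n m : ℕ}
    (f : EuclideanSpace ℝ (Fin n) → EuclideanSpace ℝ (Fin m))
    (Fm : EuclideanSpace ℝ (Fin n) → Set (EuclideanSpace ℝ (Fin m)))
    (x : EuclideanSpace ℝ (Fin n))
    (A : EuclideanSpace ℝ (Fin n) →L[ℝ] EuclideanSpace ℝ (Fin m))
    (hf : HasStrictFDerivAt f A x) (y : EuclideanSpace ℝ (Fin m)) (hy : y ∈ Fm x)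
    (u : EuclideanSpace ℝ (Fin n)) :
    sgDeriv (fun z => (f z + ·) '' Fm z) x (f x + y) u = (A u + ·) '' sgDeriv Fm x y u := by
  ext v
  constructor
  · intro hv
    have h := add_mem_sgDeriv_of_hasStrictFDerivAt hf.neg hv
    simp only [image_image, Pi.neg_apply, neg_add_cancel_left, image_id'] at h
    exact ⟨-A u + v, h, add_neg_cancel_left _ _⟩
  · rintro ⟨w, hw, rfl⟩
    exact add_mem_sgDeriv_of_hasStrictFDerivAt hf hw

end
end

section
/- Let H : ℝⁿ ⇉ ℝᵐ be positively homogeneous. Then: (a) |H|⁻ = inf{ κ > 0 : H(x) ∩ κ𝔹 ≠ ∅ for every x ∈ 𝔹 }, where 𝔹 denotes the closed unit ball; (b) |H|⁺ = inf{ κ > 0 : y ∈ H(x) implies ‖y‖ ≤ κ‖x‖ } = sup over ‖y‖ = 1 of 1/d(0, H⁻¹(y)); (c) if the graph of H is closed, then |H|⁺ < ∞ if and only if H(0) = {0}; (d) if the graph of H is closed and convex, then |H|⁻ < ∞ if and only if dom H = ℝⁿ. -/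
open Filter Topology Set Metric RealInnerProductSpace
open scoped ENNReal NNReal Pointwise

noncomputable section

section NormLemmas

variable {E F : Type*} [NormedAddCommGroup E] [NormedAddCommGroup F] {H : E → Set F}

theorem innerNormSV_eq_iInf (H : E → Set F) :
    innerNormSV H = ⨅ (κ : ℝ≥0)
      (_ : 0 < κ ∧ ∀ x : E, ‖x‖ ≤ 1 → ∃ y ∈ H x, ‖y‖ ≤ (κ : ℝ)), (κ : ℝ≥0∞) := by
  apply le_antisymm
  · refine le_iInf₂ fun κ hκ => iSup₂_le fun x hx => ?_
    obtain ⟨y, hy, hyκ⟩ := hκ.2 x hx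
    exact (iInf₂_le y hy).trans (by exact_mod_cast hyκ)
  · refine ENNReal.le_of_forall_nnreal_lt fun r hr => ?_
    by_contra! hlt
    refine hr.not_ge (iInf₂_le r ⟨by exact_mod_cast (zero_le).trans_lt hlt, fun x hx => ?_⟩)
    have hxr := (le_iSup₂ (f := fun (x : E) (_ : ‖x‖ ≤ 1) =>
      ⨅ (y : F) (_ : y ∈ H x), (‖y‖₊ : ℝ≥0∞)) x hx).trans_lt hlt
    obtain ⟨y, hy, hyr⟩ := by simpa only [iInf_lt_iff] using hxr
    exact ⟨y, hy, by exact_mod_cast hyr.le⟩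

theorem nnnorm_le_outerNormSV {x : E} (hx : ‖x‖ ≤ 1) {y : F} (hy : y ∈ H x) :
    (‖y‖₊ : ℝ≥0∞) ≤ outerNormSV H :=
  le_iSup₂_of_le x hx (le_iSup₂_of_le y hy le_rfl)

theorem outerNormSV_le_of_norm_le_mul_norm {κ : ℝ≥0}
    (hκ : ∀ (x : E) (y : F), y ∈ H x → ‖y‖ ≤ κ * ‖x‖) : outerNormSV H ≤ κ := by
  refine iSup₂_le fun x hx => iSup₂_le fun y hy => ?_
  have hle : ‖y‖ ≤ κ := (hκ x y hy).trans (mul_le_of_le_one_right κ.2 hx)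
  exact_mod_cast hle

end NormLemmas

section PosHomogeneousLemmas

variable {E F : Type*} [NormedAddCommGroup E] [NormedSpace ℝ E]
  [NormedAddCommGroup F] [NormedSpace ℝ F] {H : E → Set F}

theorem PosHomogeneous.smul_mem (hH : PosHomogeneous H) {c : ℝ} (hc : 0 ≤ c) {x : E} {y : F}
    (hy : y ∈ H x) : c • y ∈ H (c • x) := by
  rcases hc.eq_or_lt with rfl | hc
  · simpa using hH.1
  · rw [hH.2 c hc x]
    exact Set.smul_mem_smul_set hy

theorem PosHomogeneous.add_mem (hH : PosHomogeneous H) (hconv : Convex ℝ (svGraph H))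
    {x x' : E} {y y' : F} (hy : y ∈ H x) (hy' : y' ∈ H x') : y + y' ∈ H (x + x') := by
  have hmid : ((1 / 2 : ℝ) • (x, y) + (1 / 2 : ℝ) • (x', y') : E × F) ∈ svGraph H :=
    hconv (x := (x, y)) hy (y := (x', y')) hy' (by norm_num) (by norm_num) (by norm_num)
  have hdouble := hH.smul_mem (c := 2) (by norm_num) hmid
  simpa [smul_add, smul_smul] using hdouble

theorem PosHomogeneous.sum_mem (hH : PosHomogeneous H) (hconv : Convex ℝ (svGraph H))
    {ι : Type*} (s : Finset ι) {x : ι → E} {y : ι → F} (hy : ∀ i ∈ s, y i ∈ H (x i)) :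
    ∑ i ∈ s, y i ∈ H (∑ i ∈ s, x i) := by
  classical
  induction s using Finset.induction_on with
  | empty => simpa using hH.1
  | insert i s hi ih =>
    rw [Finset.sum_insert hi, Finset.sum_insert hi]
    exact hH.add_mem hconv (hy i (Finset.mem_insert_self i s))
      (ih fun j hj => hy j (Finset.mem_insert_of_mem hj))

theorem PosHomogeneous.norm_le_mul_norm (hH : PosHomogeneous H) {κ : ℝ≥0}
    (hκ : outerNormSV H ≤ κ) {x : E} {y : F} (hy : y ∈ H x) : ‖y‖ ≤ κ * ‖x‖ := by
  have hball : ∀ {x : E} {y : F}, ‖x‖ ≤ 1 → y ∈ H x → ‖y‖ ≤ κ := fun hx hy => by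
    exact_mod_cast (nnnorm_le_outerNormSV hx hy).trans hκ
  rcases eq_or_ne x 0 with rfl | hx
  · by_contra! hlt
    have hpos : 0 < ‖y‖ := by simpa using hlt
    have hmem := hH.smul_mem (c := (κ + 1) / ‖y‖) (by positivity) hy
    have hle := hball (by simp) hmem
    rw [norm_smul, Real.norm_of_nonneg (by positivity), div_mul_cancel₀ _ hpos.ne'] at hle
    linarith
  · have hpos : 0 < ‖x‖ := norm_pos_iff.2 hx
    have hmem := hH.smul_mem (c := ‖x‖⁻¹) (by positivity) hy
    have hle := hball (by simp [norm_smul, hpos.ne']) hmem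
    rwa [norm_smul, norm_inv, norm_norm, inv_mul_le_iff₀ hpos, mul_comm] at hle

theorem PosHomogeneous.outerNormSV_eq_iInf (hH : PosHomogeneous H) :
    outerNormSV H = ⨅ (κ : ℝ≥0)
      (_ : 0 < κ ∧ ∀ (x : E) (y : F), y ∈ H x → ‖y‖ ≤ (κ : ℝ) * ‖x‖), (κ : ℝ≥0∞) := by
  apply le_antisymm
  · exact le_iInf₂ fun κ hκ => outerNormSV_le_of_norm_le_mul_norm hκ.2
  · refine ENNReal.le_of_forall_nnreal_lt fun r hr => ?_
    by_contra! hlt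
    exact hr.not_ge (iInf₂_le r ⟨by exact_mod_cast (zero_le).trans_lt hlt,
      fun x y hy => hH.norm_le_mul_norm hlt.le hy⟩)

theorem PosHomogeneous.outerNormSV_eq_iSup (hH : PosHomogeneous H) :
    outerNormSV H = ⨆ (y : F) (_ : ‖y‖ = 1), (Metric.infEDist (0 : E) (svInv H y))⁻¹ := by
  apply le_antisymm
  · refine iSup₂_le fun x hx => iSup₂_le fun y hy => ?_
    rcases eq_or_ne y 0 with rfl | hy0
    · simp
    have hpos : 0 < ‖y‖ := norm_pos_iff.2 hy0
    refine le_iSup₂_of_le (‖y‖⁻¹ • y) (by simp [norm_smul, hpos.ne']) ?_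
    rw [ENNReal.le_inv_iff_le_inv]
    have hmem : ‖y‖⁻¹ • x ∈ svInv H (‖y‖⁻¹ • y) := hH.smul_mem (by positivity) hy
    refine (Metric.infEDist_le_edist_of_mem hmem).trans ?_
    rw [edist_zero_left, nnnorm_smul, nnnorm_inv, nnnorm_norm,
      ← ENNReal.coe_inv (nnnorm_ne_zero_iff.2 hy0), ENNReal.coe_le_coe]
    exact mul_le_of_le_one_right zero_le hx
  · refine iSup₂_le fun y hy => ?_
    rw [ENNReal.inv_le_iff_inv_le, Metric.le_infEDist]
    intro x hx
    rw [ENNReal.inv_le_iff_inv_le]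
    refine ENNReal.le_of_forall_nnreal_lt fun r hr => ?_
    by_contra! hlt
    have hle := hH.norm_le_mul_norm hlt.le hx
    rw [hy] at hle
    refine hr.not_ge (ENNReal.inv_le_iff_le_mul (by simp) (by simp) |>.2 ?_)
    rw [edist_zero_left]
    have hle' : (1 : ℝ≥0) ≤ ‖x‖₊ * r := by rw [mul_comm]; exact_mod_cast hle
    exact_mod_cast hle'

theorem PosHomogeneous.outerNormSV_lt_top_iff [ProperSpace F] (hH : PosHomogeneous H)
    (hclosed : IsClosed (svGraph H)) : outerNormSV H < ⊤ ↔ H 0 = {0} := by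
  constructor
  · intro hlt
    refine Subset.antisymm (fun y hy => ?_) (singleton_subset_iff.2 hH.1)
    have hle := hH.norm_le_mul_norm (ENNReal.coe_toNNReal hlt.ne).ge hy
    simpa using hle
  · intro hzero
    have hsub : ({0} : Set E) ×ˢ sphere (0 : F) 1 ⊆ (svGraph H)ᶜ := by
      rintro ⟨x, y⟩ ⟨rfl, hy⟩ (hmem : y ∈ H 0)
      rw [hzero, mem_singleton_iff] at hmem
      simp [hmem] at hy
    obtain ⟨u, v, hu, -, h0u, hv, huv⟩ := generalized_tube_lemma isCompact_singleton
      (isCompact_sphere (0 : F) 1) hclosed.isOpen_compl hsub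
    obtain ⟨δ, hδ, hball⟩ := Metric.isOpen_iff.1 hu 0 (h0u rfl)
    refine (outerNormSV_le_of_norm_le_mul_norm (κ := Real.toNNReal δ⁻¹) fun x y hy => ?_).trans_lt
      ENNReal.coe_lt_top
    rw [Real.coe_toNNReal _ (by positivity)]
    by_contra! hlt
    have hpos : 0 < ‖y‖ := lt_of_le_of_lt (by positivity) hlt
    refine huv (show (‖y‖⁻¹ • x, ‖y‖⁻¹ • y) ∈ u ×ˢ v from ⟨hball ?_, hv ?_⟩)
      (hH.smul_mem (by positivity) hy)
    · rw [mem_ball_zero_iff, norm_smul, norm_inv, norm_norm, inv_mul_lt_iff₀ hpos, mul_comm]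
      rwa [inv_mul_lt_iff₀ hδ] at hlt
    · simp [norm_smul, hpos.ne']

theorem PosHomogeneous.nonempty_of_innerNormSV_lt_top (hH : PosHomogeneous H)
    (hlt : innerNormSV H < ⊤) (x : E) : (H x).Nonempty := by
  rw [innerNormSV_eq_iInf] at hlt
  obtain ⟨κ, hκ, -⟩ := by simpa only [iInf_lt_iff] using hlt
  obtain ⟨y, hy, -⟩ := hκ.2 ((‖x‖ + 1)⁻¹ • x) (by
    rw [norm_smul, norm_inv, Real.norm_of_nonneg (by positivity),
      inv_mul_le_iff₀ (by positivity)]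
    linarith)
  have hmem := hH.smul_mem (c := ‖x‖ + 1) (by positivity) hy
  rw [smul_inv_smul₀ (by positivity)] at hmem
  exact ⟨_, hmem⟩

theorem PosHomogeneous.innerNormSV_lt_top {n : ℕ} {H : EuclideanSpace ℝ (Fin n) → Set F}
    (hH : PosHomogeneous H) (hconv : Convex ℝ (svGraph H)) (hdom : ∀ x, (H x).Nonempty) :
    innerNormSV H < ⊤ := by
  choose f hf using hdom
  set e : Fin n → EuclideanSpace ℝ (Fin n) := fun i => EuclideanSpace.single i 1 with he
  set C : ℝ≥0 := ∑ i, (‖f (e i)‖₊ + ‖f (-e i)‖₊)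
  refine lt_of_le_of_lt (iSup₂_le fun x hx => ?_) (ENNReal.coe_lt_top (r := C))
  have hcoord : ∀ i, ∃ y ∈ H (x i • e i), ‖y‖₊ ≤ ‖f (e i)‖₊ + ‖f (-e i)‖₊ := by
    intro i
    have hxi : ‖x i‖₊ ≤ 1 := (PiLp.norm_apply_le x i).trans hx
    rcases le_total 0 (x i) with h | h
    · refine ⟨x i • f (e i), hH.smul_mem h (hf _), ?_⟩
      rw [nnnorm_smul]
      exact (mul_le_of_le_one_left (zero_le) hxi).trans le_self_add
    · refine ⟨(-x i) • f (-e i), ?_, ?_⟩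
      · simpa using hH.smul_mem (neg_nonneg.2 h) (hf (-e i))
      · rw [nnnorm_smul, nnnorm_neg]
        exact (mul_le_of_le_one_left (zero_le) hxi).trans le_add_self
  choose y hy hyC using hcoord
  have hsum := hH.sum_mem hconv Finset.univ fun i _ => hy i
  have hx_sum : ∑ i, x i • e i = x := by
    simpa [he] using (EuclideanSpace.basisFun (Fin n) ℝ).sum_repr x
  rw [hx_sum] at hsum
  refine (iInf₂_le _ hsum).trans ?_
  exact_mod_cast (nnnorm_sum_le _ _).trans (Finset.sum_le_sum fun i _ => hyC i)

end PosHomogeneousLemmas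

/-- Norm characterizations for positively homogeneous set-valued maps. -/
theorem norm_characterizations {n m : ℕ}
    (H : EuclideanSpace ℝ (Fin n) → Set (EuclideanSpace ℝ (Fin m)))
    (hH : PosHomogeneous H) :
    (innerNormSV H = ⨅ (κ : ℝ≥0)
      (_ : 0 < κ ∧ ∀ x : EuclideanSpace ℝ (Fin n), ‖x‖ ≤ 1 → ∃ y ∈ H x, ‖y‖ ≤ (κ : ℝ)),
        (κ : ℝ≥0∞)) ∧
    (outerNormSV H = ⨅ (κ : ℝ≥0)
      (_ : 0 < κ ∧ ∀ (x : EuclideanSpace ℝ (Fin n)) (y : EuclideanSpace ℝ (Fin m)),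
            y ∈ H x → ‖y‖ ≤ (κ : ℝ) * ‖x‖), (κ : ℝ≥0∞)) ∧
    (outerNormSV H = ⨆ (y : EuclideanSpace ℝ (Fin m)) (_ : ‖y‖ = 1),
        (EMetric.infEdist (0 : EuclideanSpace ℝ (Fin n)) (svInv H y))⁻¹) ∧
    (IsClosed (svGraph H) → (outerNormSV H < ⊤ ↔ H 0 = {0})) ∧
    (IsClosed (svGraph H) → Convex ℝ (svGraph H) →
      (innerNormSV H < ⊤ ↔ ∀ x, (H x).Nonempty)) := by
  exact ⟨innerNormSV_eq_iInf H, hH.outerNormSV_eq_iInf, hH.outerNormSV_eq_iSup,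
    hH.outerNormSV_lt_top_iff, fun _ hconv =>
      ⟨hH.nonempty_of_innerNormSV_lt_top, hH.innerNormSV_lt_top hconv⟩⟩

end
end

section
/- Let F : ℝⁿ ⇉ ℝᵐ be a set-valued map and (x̄, ȳ) ∈ gph F a point at which gph F is locally closed. If c ∈ (0, ∞) satisfies limsup, over (x,y) → (x̄,ȳ) with (x,y) ∈ gph F, of |DF(x|y)⁻¹|⁻ < c, then there exist neighborhoods U of x̄ and V of ȳ such that d(x, F⁻¹(y)) ≤ c · d(y, F(x)) for all x ∈ U and y ∈ V. -/
open Filter Topology Set Metric RealInnerProductSpace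
open scoped ENNReal NNReal Pointwise

noncomputable section

/-- First-order decrease: a direction `(u, w)` tangent to the graph at `(p, q)`, with `w` the unit
vector pointing from `q` to `y` and `‖u‖ < c`, leads to nearby points of the graph with a smaller
value of the penalized distance `‖y - ·‖ + c⁻¹ * ‖· - x₀‖`. -/
theorem exists_penalized_dist_lt {E F : Type*} [NormedAddCommGroup E] [NormedSpace ℝ E]
    [NormedAddCommGroup F] [NormedSpace ℝ F] {Ω : Set (E × F)} {c : ℝ} (hc : 0 < c)
    {x₀ p u : E} {y q : F} (hqy : q ≠ y) (hu : ‖u‖ < c)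
    (htan : (u, ‖y - q‖⁻¹ • (y - q)) ∈ contingentCone Ω (p, q))
    {O : Set (E × F)} (hO : O ∈ 𝓝 (p, q)) :
    ∃ z ∈ Ω ∩ O, ‖y - z.2‖ + c⁻¹ * ‖z.1 - x₀‖ < ‖y - q‖ + c⁻¹ * ‖p - x₀‖ := by
  obtain ⟨t, w, htpos, ht, hw, hmem⟩ := htan
  set v := ‖y - q‖⁻¹ • (y - q) with hv
  have hN : 0 < ‖y - q‖ := norm_pos_iff.2 (sub_ne_zero.2 hqy.symm)
  have hyq : y - q = ‖y - q‖ • v := by rw [hv, smul_inv_smul₀ hN.ne']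
  have hvn : ‖v‖ = 1 := by
    rw [hv, norm_smul, norm_inv, norm_norm, inv_mul_cancel₀ hN.ne']
  clear_value v
  have hw1 : Tendsto (fun k => (w k).1) atTop (𝓝 u) := (continuous_fst.tendsto _).comp hw
  have hw2 : Tendsto (fun k => (w k).2) atTop (𝓝 v) := (continuous_snd.tendsto _).comp hw
  have hlim : Tendsto (fun k => ‖v - (w k).2‖ + c⁻¹ * ‖(w k).1‖) atTop
      (𝓝 (‖v - v‖ + c⁻¹ * ‖u‖)) :=
    (tendsto_const_nhds.sub hw2).norm.add (hw1.norm.const_mul _)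
  have hlt : ‖v - v‖ + c⁻¹ * ‖u‖ < 1 := by
    rw [sub_self, norm_zero, zero_add, inv_mul_lt_iff₀ hc, mul_one]
    exact hu
  have hpt : Tendsto (fun k => (p, q) + t k • w k) atTop (𝓝 (p, q)) := by
    simpa using tendsto_const_nhds.add (ht.smul hw)
  obtain ⟨k, hk1, hk2, hk3⟩ := ((hlim.eventually_lt_const hlt).and
    ((ht.eventually_le_const hN).and (hpt.eventually_mem hO))).exists
  refine ⟨_, ⟨hmem k, hk3⟩, ?_⟩
  have htk := htpos k
  have h1 : ‖y - (q + t k • (w k).2)‖ ≤ ‖y - q‖ - t k + t k * ‖v - (w k).2‖ := by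
    have e : y - (q + t k • (w k).2) = (‖y - q‖ - t k) • v + t k • (v - (w k).2) := by
      rw [sub_smul, ← hyq, smul_sub]; abel
    rw [e]
    refine (norm_add_le _ _).trans_eq ?_
    rw [norm_smul, norm_smul, hvn, Real.norm_of_nonneg (sub_nonneg.2 hk2),
      Real.norm_of_nonneg htk.le, mul_one]
  have h2 : ‖p + t k • (w k).1 - x₀‖ ≤ ‖p - x₀‖ + t k * ‖(w k).1‖ := by
    rw [add_sub_right_comm]
    refine (norm_add_le _ _).trans_eq ?_
    rw [norm_smul, Real.norm_of_nonneg htk.le]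
  have h3 := mul_le_mul_of_nonneg_left h2 (inv_pos.2 hc).le
  have h4 := mul_lt_mul_of_pos_left hk1 htk
  simp only [Prod.fst_add, Prod.snd_add, Prod.smul_fst, Prod.smul_snd]
  linarith

/-- A bound on the inner norm of the inverse graphical derivatives on a ball in which the graph is
closed yields a Lipschitz selection property of the inverse map. -/
theorem exists_mem_svInv_norm_sub_le {E F : Type*} [NormedAddCommGroup E] [NormedSpace ℝ E]
    [ProperSpace E] [NormedAddCommGroup F] [NormedSpace ℝ F] [ProperSpace F]
    {Fm : E → Set F} {xbar : E} {ybar : F} {c r s : ℝ} (hc : 0 < c)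
    (hclosed : IsClosed (svGraph Fm ∩ closedBall (xbar, ybar) r))
    (hnorm : ∀ z ∈ svGraph Fm ∩ ball (xbar, ybar) r,
      innerNormSV (svInv (gDeriv Fm z.1 z.2)) < ENNReal.ofReal c)
    (hs : 0 < s) (hsr : s * (3 + 2 * c) ≤ r)
    {x₀ : E} {y₀ y : F} (hxy : y₀ ∈ Fm x₀) (hx₀ : dist x₀ xbar < s) (hy₀ : dist y₀ ybar < s)
    (hy : dist y ybar < s) :
    ∃ x ∈ svInv Fm y, ‖x - x₀‖ ≤ c * ‖y - y₀‖ := by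
  have hsc : 0 < s * c := mul_pos hs hc
  have hcomp : IsCompact (svGraph Fm ∩ closedBall (xbar, ybar) r) :=
    (isCompact_closedBall (xbar, ybar) r).of_isClosed_subset hclosed inter_subset_right
  have hmem₀ : (x₀, y₀) ∈ svGraph Fm ∩ closedBall (xbar, ybar) r :=
    ⟨hxy, by rw [mem_closedBall, Prod.dist_eq]; exact max_le (by linarith) (by linarith)⟩
  obtain ⟨⟨p, q⟩, ⟨hpq, -⟩, hmin⟩ := hcomp.exists_isMinOn ⟨_, hmem₀⟩
    (f := fun z : E × F => ‖y - z.2‖ + c⁻¹ * ‖z.1 - x₀‖) (by fun_prop)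
  rw [isMinOn_iff] at hmin
  have hle : ‖y - q‖ + c⁻¹ * ‖p - x₀‖ ≤ ‖y - y₀‖ := by
    simpa using hmin _ hmem₀
  have hp : ‖p - x₀‖ ≤ c * ‖y - y₀‖ := by
    rw [← inv_mul_le_iff₀ hc]
    linarith [norm_nonneg (y - q)]
  by_cases hqy : q = y
  · exact ⟨p, hqy ▸ hpq, hp⟩
  exfalso
  have hyy : ‖y - y₀‖ < 2 * s := by
    rw [← dist_eq_norm]
    linarith [dist_triangle_right y y₀ ybar]
  have hball : (p, q) ∈ ball (xbar, ybar) r := by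
    rw [mem_ball, Prod.dist_eq]
    refine max_lt ?_ ?_
    · have h1 := dist_triangle p x₀ xbar
      have h2 := mul_lt_mul_of_pos_left hyy hc
      rw [dist_eq_norm p x₀] at h1
      linarith
    · have h1 := dist_triangle_left q ybar y
      have h2 : 0 ≤ c⁻¹ * ‖p - x₀‖ := by positivity
      rw [dist_eq_norm y q] at h1
      linarith
  have hN : ‖y - q‖ ≠ 0 := norm_ne_zero_iff.2 (sub_ne_zero.2 (Ne.symm hqy))
  have hv : ‖‖y - q‖⁻¹ • (y - q)‖ ≤ 1 := by
    rw [norm_smul, norm_inv, norm_norm, inv_mul_cancel₀ hN]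
  have hinf : ⨅ (u : E) (_ : u ∈ svInv (gDeriv Fm p q) (‖y - q‖⁻¹ • (y - q))), (‖u‖₊ : ℝ≥0∞)
      < ENNReal.ofReal c := by
    refine lt_of_le_of_lt ?_ (hnorm (p, q) ⟨hpq, hball⟩)
    rw [innerNormSV]
    exact le_iSup₂_of_le (‖y - q‖⁻¹ • (y - q)) hv le_rfl
  simp only [iInf_lt_iff] at hinf
  obtain ⟨u, htan, hu⟩ := hinf
  have hu' : ‖u‖ < c := by
    rwa [← enorm_eq_nnnorm, ← ofReal_norm, ENNReal.ofReal_lt_ofReal_iff hc] at hu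
  obtain ⟨z, hz, hzlt⟩ := exists_penalized_dist_lt hc (x₀ := x₀) hqy hu' htan
    (isOpen_ball.mem_nhds hball)
  exact hzlt.not_ge (hmin z ⟨hz.1, ball_subset_closedBall hz.2⟩)

/-- If the limsup of the inner norms of the inverses of the graphical derivatives near
`(xbar, ybar)` is `< c`, then a metric-regularity-type estimate with constant `c` holds
on neighborhoods of `xbar` and `ybar`. -/
theorem estimate_of_limsup_innerNorm_lt {n m : ℕ}
    (Fm : EuclideanSpace ℝ (Fin n) → Set (EuclideanSpace ℝ (Fin m)))
    (xbar : EuclideanSpace ℝ (Fin n)) (ybar : EuclideanSpace ℝ (Fin m))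
    (hgr : ybar ∈ Fm xbar) (hloc : LocClosedAt (svGraph Fm) (xbar, ybar))
    (c : ℝ) (hc : 0 < c)
    (hls : Filter.limsup
        (fun q : EuclideanSpace ℝ (Fin n) × EuclideanSpace ℝ (Fin m) =>
          innerNormSV (svInv (gDeriv Fm q.1 q.2)))
        (𝓝[svGraph Fm] (xbar, ybar)) < ENNReal.ofReal c) :
    ∃ U ∈ 𝓝 xbar, ∃ V ∈ 𝓝 ybar, ∀ x ∈ U, ∀ y ∈ V,
      EMetric.infEdist x (svInv Fm y) ≤ ENNReal.ofReal c * EMetric.infEdist y (Fm x) := by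
  obtain ⟨r₁, hr₁, hclosed⟩ := hloc
  obtain ⟨r₂, hr₂, hnorm⟩ := Metric.eventually_nhds_iff_ball.1
    (eventually_nhdsWithin_iff.1 (eventually_lt_of_limsup_lt hls))
  set r := min r₁ r₂
  have hr : 0 < r := lt_min hr₁ hr₂
  have hclosed' : IsClosed (svGraph Fm ∩ closedBall (xbar, ybar) r) := by
    have h := hclosed.inter (isClosed_closedBall (x := (xbar, ybar)) (ε := r))
    rwa [inter_assoc,
      inter_eq_self_of_subset_right (closedBall_subset_closedBall (min_le_left r₁ r₂))] at h
  set s := r / (3 + 2 * c)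
  have hs : 0 < s := by positivity
  have key := fun x₀ y₀ y => exists_mem_svInv_norm_sub_le (x₀ := x₀) (y₀ := y₀) (y := y) hc hclosed'
    (fun z hz => hnorm z (ball_subset_ball (min_le_right r₁ r₂) hz.2) hz.1) hs
    (div_mul_cancel₀ r (by positivity)).le
  set δ := c * s / (1 + 2 * c)
  have hδ : 0 < δ := by positivity
  have hδs : δ * (1 + 2 * c) = c * s := div_mul_cancel₀ _ (by positivity)
  have hδle : δ < s := by nlinarith
  refine ⟨ball xbar δ, ball_mem_nhds _ hδ, ball ybar δ, ball_mem_nhds _ hδ, fun x hx y hy => ?_⟩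
  rw [mem_ball] at hx hy
  have hpoint : ∀ y' ∈ Fm x,
      EMetric.infEdist x (svInv Fm y) ≤ ENNReal.ofReal c * edist y y' := by
    intro y' hy'
    suffices h : ∃ x' ∈ svInv Fm y, dist x x' ≤ c * dist y y' by
      obtain ⟨x', hx', hd⟩ := h
      refine (Metric.infEDist_le_edist_of_mem hx').trans ?_
      rw [edist_dist, edist_dist, ← ENNReal.ofReal_mul hc.le]
      exact ENNReal.ofReal_le_ofReal hd
    by_cases hnear : dist y' ybar < s
    · obtain ⟨x', hx', hd⟩ := key x y' y hy' (hx.trans hδle) hnear (hy.trans hδle)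
      exact ⟨x', hx', by rwa [dist_comm, dist_eq_norm, dist_eq_norm]⟩
    · obtain ⟨x', hx', hd⟩ := key xbar ybar y hgr (by simpa) (by simpa) (hy.trans hδle)
      refine ⟨x', hx', ?_⟩
      rw [← dist_eq_norm, ← dist_eq_norm] at hd
      have h1 := dist_triangle_right x x' xbar
      have h2 := dist_triangle_left y' ybar y
      have h3 : c * (s - δ) ≤ c * dist y y' := mul_le_mul_of_nonneg_left (by linarith) hc.le
      have h4 := mul_lt_mul_of_pos_left hy hc
      linarith
  rw [← ENNReal.div_le_iff' (by simp [hc]) (by simp)]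
  refine Metric.le_infEDist.2 fun y' hy' => ?_
  rw [ENNReal.div_le_iff' (by simp [hc]) (by simp)]
  exact hpoint y' hy'

end
end

section
/- Let F : ℝⁿ ⇉ ℝᵐ be a set-valued map and (x̄, ȳ) ∈ gph F a point at which gph F is locally closed. Then reg(F; x̄|ȳ) = limsup, over (x,y) → (x̄,ȳ) with (x,y) ∈ gph F, of |DF(x|y)⁻¹|⁻. In particular, F is metrically regular at x̄ for ȳ if and only if this limsup is finite. -/
open Filter Topology Set Metric RealInnerProductSpace
open scoped ENNReal NNReal Pointwise

noncomputable section

section RegularityEstimates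

variable {E F : Type*} [NormedAddCommGroup E] [NormedAddCommGroup F]

theorem exists_norm_lt_of_innerNormSV_lt {H : E → Set F} {c : ℝ≥0}
    (h : innerNormSV H < (c : ℝ≥0∞)) {v : E} (hv : ‖v‖ ≤ 1) : ∃ u ∈ H v, ‖u‖ < c := by
  have : (⨅ (y : F) (_ : y ∈ H v), (‖y‖₊ : ℝ≥0∞)) < c :=
    (le_iSup₂ (f := fun (x : E) (_ : ‖x‖ ≤ 1) => ⨅ (y : F) (_ : y ∈ H x), (‖y‖₊ : ℝ≥0∞))
      v hv).trans_lt h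
  obtain ⟨u, hu, huc⟩ := by simpa only [iInf_lt_iff] using this
  exact ⟨u, hu, ENNReal.coe_lt_coe.1 huc⟩

theorem regMod_lt_top_iff {Fm : E → Set F} {xbar : E} {ybar : F} :
    regMod Fm xbar ybar < ⊤ ↔ ∃ κ : ℝ≥0, MetrRegWith κ Fm xbar ybar := by
  simp [regMod, iInf_lt_iff]

/-- The linear estimate for the inverse map at nearby graph points yields metric regularity. -/
theorem metrRegWith_of_forall_exists_mem_dist_le {Fm : E → Set F} {xbar : E} {ybar : F}
    (hgr : ybar ∈ Fm xbar) {c : ℝ≥0} (hc : 0 < c) {δ : ℝ} (hδ : 0 < δ)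
    (h : ∀ x₀ y₀ z, y₀ ∈ Fm x₀ → dist x₀ xbar < δ → dist y₀ ybar < δ → dist z ybar < δ →
      ∃ x, z ∈ Fm x ∧ dist x x₀ ≤ c * dist z y₀) :
    MetrRegWith c Fm xbar ybar := by
  have hc' : (0 : ℝ) < c := hc
  set η : ℝ := c * δ / (1 + 2 * c) with hη
  have hη0 : 0 < η := by positivity
  have hηδ : η * (1 + 2 * c) = c * δ := div_mul_cancel₀ _ (by positivity)
  have hηlt : η < δ := by
    rw [hη, div_lt_iff₀ (by positivity)]
    nlinarith [mul_pos hc' hδ]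
  refine ⟨_, Metric.ball_mem_nhds xbar hη0, _, Metric.ball_mem_nhds ybar hη0,
    fun x hx z hz => ?_⟩
  rw [Metric.mem_ball] at hx hz
  rw [mul_comm, ← ENNReal.div_le_iff (by simpa using hc.ne') ENNReal.coe_ne_top]
  refine Metric.le_infEDist.2 fun y hy => ?_
  rw [ENNReal.div_le_iff (by simpa using hc.ne') ENNReal.coe_ne_top, mul_comm]
  obtain ⟨x', hx', hdist⟩ : ∃ x', z ∈ Fm x' ∧ dist x x' ≤ c * dist z y := by
    rcases lt_or_ge (dist y ybar) δ with hyδ | hyδ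
    · obtain ⟨x', hx', hd⟩ := h x y z hy (hx.trans hηlt) hyδ (hz.trans hηlt)
      exact ⟨x', hx', by rwa [dist_comm]⟩
    · obtain ⟨x', hx', hd⟩ := h xbar ybar z hgr (by simpa using hδ) (by simpa using hδ)
        (hz.trans hηlt)
      refine ⟨x', hx', ?_⟩
      have h1 := dist_triangle_right x x' xbar
      have h2 : δ - η ≤ dist z y := by linarith [dist_triangle_left y ybar z]
      have h3 := mul_le_mul_of_nonneg_left h2 hc'.le
      have h4 := mul_le_mul_of_nonneg_left hz.le hc'.le
      linarith
  refine (Metric.infEDist_le_edist_of_mem (show x' ∈ svInv Fm z from hx')).trans ?_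
  rw [edist_dist, edist_dist, ← ENNReal.ofReal_coe_nnreal, ← ENNReal.ofReal_mul c.coe_nonneg]
  exact ENNReal.ofReal_le_ofReal hdist

end RegularityEstimates

section RegularityCriterion

variable {E F : Type*} [NormedAddCommGroup E] [NormedSpace ℝ E]
  [NormedAddCommGroup F] [NormedSpace ℝ F]

/-- The inner norm of the inverse graphical derivative is bounded by any constant of metric
regularity, at all graph points near the reference point. -/
theorem MetrRegWith.eventually_innerNormSV_le [ProperSpace E] {κ : ℝ≥0} {Fm : E → Set F}
    {xbar : E} {ybar : F} (h : MetrRegWith κ Fm xbar ybar) :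
    ∀ᶠ q in 𝓝[svGraph Fm] (xbar, ybar),
      innerNormSV (svInv (gDeriv Fm q.1 q.2)) ≤ (κ : ℝ≥0∞) := by
  obtain ⟨U, hU, V, hV, hreg⟩ := h
  have hV' : ∀ᶠ y in 𝓝 ybar, V ∈ 𝓝 y := eventually_mem_nhds_iff.2 hV
  filter_upwards [self_mem_nhdsWithin, mem_nhdsWithin_of_mem_nhds (prod_mem_nhds hU hV')]
  rintro ⟨x, y⟩ (hxy : y ∈ Fm x) ⟨hx, hy⟩
  simp only at hx hy
  refine iSup₂_le fun v hv => ?_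
  -- points of the graph over `y + t • v`, for `t` small
  have key : ∀ k : ℕ, ∃ t : ℝ, ∃ u : E, 0 < t ∧ t < 1 / ((k : ℝ) + 1) ∧
      ‖u‖ ≤ κ + 1 / ((k : ℝ) + 1) ∧ y + t • v ∈ Fm (x + t • u) := by
    intro k
    have hk : (0 : ℝ) < 1 / ((k : ℝ) + 1) := by positivity
    have hcont : Tendsto (fun t : ℝ => y + t • v) (𝓝[>] 0) (𝓝 y) := by
      have : Tendsto (fun t : ℝ => y + t • v) (𝓝 0) (𝓝 (y + (0 : ℝ) • v)) := by
        apply Continuous.tendsto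
        fun_prop
      simp only [zero_smul, add_zero] at this
      exact this.mono_left nhdsWithin_le_nhds
    obtain ⟨t, htV, ht0, htk⟩ :=
      ((hcont.eventually hy).and (Ioo_mem_nhdsGT hk)).exists
    have hle : Metric.infEDist x (svInv Fm (y + t • v)) ≤ ENNReal.ofReal (κ * t) := by
      refine (hreg x hx _ htV).trans ?_
      rw [ENNReal.ofReal_mul κ.coe_nonneg, ENNReal.ofReal_coe_nnreal]
      gcongr
      refine (Metric.infEDist_le_edist_of_mem hxy).trans ?_
      rw [edist_dist, dist_eq_norm, add_sub_cancel_left, norm_smul, Real.norm_of_nonneg ht0.le]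
      exact ENNReal.ofReal_le_ofReal (mul_le_of_le_one_right ht0.le hv)
    have hlt : Metric.infEDist x (svInv Fm (y + t • v)) <
        ENNReal.ofReal ((κ + 1 / ((k : ℝ) + 1)) * t) := by
      refine hle.trans_lt ((ENNReal.ofReal_lt_ofReal_iff (by positivity)).2 ?_)
      nlinarith [mul_pos hk ht0]
    obtain ⟨z, hz, hxz⟩ := Metric.infEDist_lt_iff.1 hlt
    rw [edist_dist, ENNReal.ofReal_lt_ofReal_iff (by positivity), dist_comm, dist_eq_norm] at hxz
    refine ⟨t, t⁻¹ • (z - x), ht0, htk, ?_, ?_⟩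
    · rw [norm_smul, norm_inv, Real.norm_of_nonneg ht0.le, inv_mul_le_iff₀ ht0]
      linarith
    · rw [smul_inv_smul₀ ht0.ne', add_sub_cancel]
      exact hz
  choose t u ht0 htk hu hmem using key
  have hinv : Tendsto (fun k : ℕ => 1 / ((k : ℝ) + 1)) atTop (𝓝 0) :=
    tendsto_one_div_add_atTop_nhds_zero_nat
  have ht : Tendsto t atTop (𝓝 0) :=
    squeeze_zero (fun k => (ht0 k).le) (fun k => (htk k).le) hinv
  have hbdd : ∀ k, u k ∈ Metric.closedBall (0 : E) (κ + 1) := fun k => by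
    rw [mem_closedBall_zero_iff]
    refine (hu k).trans ?_
    gcongr
    exact div_le_one_of_le₀ (by linarith [(Nat.cast_nonneg k : (0 : ℝ) ≤ k)]) (by positivity)
  obtain ⟨w, -, φ, hφ, hw⟩ := (isCompact_closedBall (0 : E) (κ + 1)).tendsto_subseq hbdd
  have hwκ : ‖w‖ ≤ κ := by
    refine le_of_tendsto_of_tendsto' hw.norm (b := atTop) ?_ (fun k => hu (φ k))
    simpa using (hinv.comp hφ.tendsto_atTop).const_add (κ : ℝ)
  refine (iInf₂_le w ?_).trans (ENNReal.coe_le_coe.2 hwκ)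
  exact ⟨t ∘ φ, fun k => (u (φ k), v), fun k => ht0 _, ht.comp hφ.tendsto_atTop,
    hw.prodMk_nhds tendsto_const_nhds, fun k => hmem (φ k)⟩

/-- A local minimizer of the penalized residual over the graph has zero residual, provided the
inverse graphical derivative has an element of norm less than the penalty constant. -/
theorem eq_of_isLocalMinOn_penalized_residual {Fm : E → Set F} {x x₀ : E} {y z : F} {c : ℝ}
    (hc : 0 < c) (hD : ∀ v : F, ‖v‖ ≤ 1 → ∃ u : E, ‖u‖ < c ∧ v ∈ gDeriv Fm x y u)
    (hmin : IsLocalMinOn (fun p : E × F => ‖z - p.2‖ + c⁻¹ * ‖p.1 - x₀‖) (svGraph Fm) (x, y)) :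
    y = z := by
  by_contra hne
  have hr : 0 < ‖z - y‖ := norm_pos_iff.2 (sub_ne_zero.2 (Ne.symm hne))
  set r := ‖z - y‖ with hrdef
  obtain ⟨u, huc, t, w, ht0, ht, hw, hmem⟩ := hD (r⁻¹ • (z - y)) (by
    rw [norm_smul, norm_inv, norm_norm, inv_mul_cancel₀ hr.ne'])
  set v : F := r⁻¹ • (z - y) with hv
  have hzy : z - y = r • v := by rw [hv, smul_inv_smul₀ hr.ne']
  have hvn : ‖v‖ = 1 := by
    rw [hv, norm_smul, norm_inv, norm_norm, inv_mul_cancel₀ hr.ne']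
  have hconv : Tendsto (fun k => (x, y) + t k • w k) atTop (𝓝[svGraph Fm] (x, y)) := by
    refine tendsto_nhdsWithin_iff.2 ⟨?_, Eventually.of_forall hmem⟩
    simpa using (ht.smul hw).const_add (x, y)
  have hw1 : Tendsto (fun k => (w k).1) atTop (𝓝 u) := (continuous_fst.tendsto _).comp hw
  have hw2 : Tendsto (fun k => (w k).2) atTop (𝓝 v) := (continuous_snd.tendsto _).comp hw
  have hrate : Tendsto (fun k => ‖v - (w k).2‖ + c⁻¹ * ‖(w k).1‖) atTop (𝓝 (c⁻¹ * ‖u‖)) := by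
    simpa using (hw2.const_sub v).norm.add (hw1.norm.const_mul c⁻¹)
  have hlt : c⁻¹ * ‖u‖ < 1 := by rwa [inv_mul_lt_iff₀ hc, mul_one]
  obtain ⟨k, hk, hkr, hkt⟩ := ((hconv.eventually hmin).and
    ((hrate.eventually_lt_const hlt).and (ht.eventually_lt_const hr))).exists
  simp only [Prod.snd_add, Prod.smul_snd, Prod.fst_add, Prod.smul_fst] at hk
  have h1 : ‖z - (y + t k • (w k).2)‖ ≤ (r - t k) + t k * ‖v - (w k).2‖ := by
    have : z - (y + t k • (w k).2) = (r - t k) • v + t k • (v - (w k).2) := by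
      rw [← sub_sub, hzy, sub_smul, smul_sub]
      abel
    rw [this]
    refine (norm_add_le _ _).trans ?_
    rw [norm_smul _ v, hvn, norm_smul, mul_one, Real.norm_of_nonneg (sub_nonneg.2 hkt.le),
      Real.norm_of_nonneg (ht0 k).le]
  have h2 : ‖x + t k • (w k).1 - x₀‖ ≤ ‖x - x₀‖ + t k * ‖(w k).1‖ := by
    rw [add_sub_right_comm]
    refine (norm_add_le _ _).trans ?_
    rw [norm_smul, Real.norm_of_nonneg (ht0 k).le]
  have h3 := mul_le_mul_of_nonneg_left h2 (inv_pos.2 hc).le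
  have h4 := mul_lt_mul_of_pos_left hkr (ht0 k)
  rw [← hrdef] at hk
  linarith

/-- If the inverse graphical derivative is uniformly bounded in inner norm near a point where the
graph is locally closed, then nearby values of the inverse map satisfy a linear estimate. -/
theorem exists_forall_exists_mem_dist_le [ProperSpace E] [ProperSpace F] {Fm : E → Set F}
    {xbar : E} {ybar : F} (hloc : LocClosedAt (svGraph Fm) (xbar, ybar)) {c : ℝ} (hc : 0 < c)
    (hD : ∀ᶠ q in 𝓝[svGraph Fm] (xbar, ybar),
      ∀ v : F, ‖v‖ ≤ 1 → ∃ u : E, ‖u‖ < c ∧ v ∈ gDeriv Fm q.1 q.2 u) :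
    ∃ δ > 0, ∀ x₀ y₀ z, y₀ ∈ Fm x₀ → dist x₀ xbar < δ → dist y₀ ybar < δ → dist z ybar < δ →
      ∃ x, z ∈ Fm x ∧ dist x x₀ ≤ c * dist z y₀ := by
  obtain ⟨r, hr, hclosed⟩ := hloc
  obtain ⟨ε, hε, hball⟩ := Metric.mem_nhdsWithin_iff.1 hD
  set ρ := min r ε with hρ
  have hρ0 : 0 < ρ := lt_min hr hε
  have hK : IsCompact (svGraph Fm ∩ Metric.closedBall (xbar, ybar) r) :=
    (isCompact_closedBall (xbar, ybar) r).of_isClosed_subset hclosed inter_subset_right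
  refine ⟨ρ / (3 + 2 * c), by positivity, fun x₀ y₀ z hgr hx₀ hy₀ hz => ?_⟩
  set δ := ρ / (3 + 2 * c) with hδ
  have hδρ : δ * (3 + 2 * c) = ρ := div_mul_cancel₀ _ (by positivity)
  have hδ0 : 0 < δ := by positivity
  have hcδ : 0 < c * δ := by positivity
  have hρr : ρ ≤ r := min_le_left _ _
  have hmem₀ : (x₀, y₀) ∈ svGraph Fm ∩ Metric.closedBall (xbar, ybar) r :=
    ⟨hgr, by
      rw [Metric.mem_closedBall, Prod.dist_eq]
      exact max_le (by simp only; linarith) (by simp only; linarith)⟩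
  obtain ⟨⟨x, y⟩, ⟨hxy, -⟩, hmin⟩ := hK.exists_isMinOn ⟨_, hmem₀⟩
    (f := fun p : E × F => ‖z - p.2‖ + c⁻¹ * ‖p.1 - x₀‖) (by fun_prop)
  have hle : dist z y + c⁻¹ * dist x x₀ ≤ dist z y₀ := by
    simpa [dist_eq_norm] using hmin hmem₀
  have hx : dist x x₀ ≤ c * dist z y₀ := by
    have : c⁻¹ * dist x x₀ ≤ dist z y₀ := by linarith [dist_nonneg (x := z) (y := y)]
    rwa [inv_mul_le_iff₀ hc] at this
  have hy : dist z y ≤ dist z y₀ := by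
    have : 0 ≤ c⁻¹ * dist x x₀ := by positivity
    linarith
  have hzy₀ : dist z y₀ < 2 * δ := by linarith [dist_triangle_right z y₀ ybar]
  have hlt : dist (x, y) (xbar, ybar) < ρ := by
    rw [Prod.dist_eq]
    refine max_lt ?_ ?_
    · have := mul_lt_mul_of_pos_left hzy₀ hc
      simp only
      linarith [dist_triangle x x₀ xbar]
    · simp only
      linarith [dist_triangle_left y ybar z]
  have hloc_min : IsLocalMinOn (fun p : E × F => ‖z - p.2‖ + c⁻¹ * ‖p.1 - x₀‖)
      (svGraph Fm) (x, y) := by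
    refine mem_nhdsWithin_iff_exists_mem_nhds_inter.2
      ⟨_, Metric.closedBall_mem_nhds_of_mem (Metric.mem_ball.2 (hlt.trans_le hρr)), ?_⟩
    exact fun p hp => hmin ⟨hp.2, hp.1⟩
  have hyz : y = z := eq_of_isLocalMinOn_penalized_residual hc
    (hball ⟨Metric.mem_ball.2 (hlt.trans_le (min_le_right _ _)), hxy⟩) hloc_min
  exact ⟨x, hyz ▸ hxy, hx⟩

theorem metrRegWith_of_limsup_lt [ProperSpace E] [ProperSpace F] {Fm : E → Set F}
    {xbar : E} {ybar : F} (hgr : ybar ∈ Fm xbar) (hloc : LocClosedAt (svGraph Fm) (xbar, ybar))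
    {c : ℝ≥0}
    (h : limsup (fun q : E × F => innerNormSV (svInv (gDeriv Fm q.1 q.2)))
      (𝓝[svGraph Fm] (xbar, ybar)) < c) :
    MetrRegWith c Fm xbar ybar := by
  have hc : 0 < c := ENNReal.coe_pos.1 (bot_le.trans_lt h)
  obtain ⟨δ, hδ, hest⟩ := exists_forall_exists_mem_dist_le hloc (c := c) hc <| by
    filter_upwards [eventually_lt_of_limsup_lt h] with q hq v hv
    obtain ⟨u, hu, huc⟩ := exists_norm_lt_of_innerNormSV_lt hq hv
    exact ⟨u, huc, hu⟩
  exact metrRegWith_of_forall_exists_mem_dist_le hgr hc hδ hest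

theorem regMod_eq_limsup_innerNormSV [ProperSpace E] [ProperSpace F] {Fm : E → Set F}
    {xbar : E} {ybar : F} (hgr : ybar ∈ Fm xbar)
    (hloc : LocClosedAt (svGraph Fm) (xbar, ybar)) :
    regMod Fm xbar ybar = limsup (fun q : E × F => innerNormSV (svInv (gDeriv Fm q.1 q.2)))
      (𝓝[svGraph Fm] (xbar, ybar)) := by
  refine le_antisymm (le_of_forall_gt fun b hb => ?_)
    (le_iInf₂ fun κ hκ => limsup_le_of_le (by isBoundedDefault) hκ.eventually_innerNormSV_le)
  obtain ⟨c, hLc, hcb⟩ := ENNReal.lt_iff_exists_nnreal_btwn.1 hb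
  exact (iInf₂_le c (metrRegWith_of_limsup_lt hgr hloc hLc)).trans_lt hcb

end RegularityCriterion

/-- Graphical derivative criterion for metric regularity:
`reg (F; xbar|ybar)` equals the limsup of `|DF(x|y)⁻¹|⁻` over the graph. -/
theorem gDeriv_criterion_for_metric_regularity {n m : ℕ}
    (Fm : EuclideanSpace ℝ (Fin n) → Set (EuclideanSpace ℝ (Fin m)))
    (xbar : EuclideanSpace ℝ (Fin n)) (ybar : EuclideanSpace ℝ (Fin m))
    (hgr : ybar ∈ Fm xbar) (hloc : LocClosedAt (svGraph Fm) (xbar, ybar)) :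
    regMod Fm xbar ybar = Filter.limsup
        (fun q : EuclideanSpace ℝ (Fin n) × EuclideanSpace ℝ (Fin m) =>
          innerNormSV (svInv (gDeriv Fm q.1 q.2)))
        (𝓝[svGraph Fm] (xbar, ybar)) ∧
    ((∃ κ : ℝ≥0, MetrRegWith κ Fm xbar ybar) ↔
      Filter.limsup
        (fun q : EuclideanSpace ℝ (Fin n) × EuclideanSpace ℝ (Fin m) =>
          innerNormSV (svInv (gDeriv Fm q.1 q.2)))
        (𝓝[svGraph Fm] (xbar, ybar)) < ⊤) := by
  have hreg := regMod_eq_limsup_innerNormSV hgr hloc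
  exact ⟨hreg, hreg ▸ regMod_lt_top_iff.symm⟩

end
end

section
/- Let F : ℝⁿ ⇉ ℝᵐ be a set-valued map and (x̄, ȳ) ∈ gph F a point at which gph F is locally closed. Then reg(F; x̄|ȳ) = |D*F(x̄|ȳ)⁻¹|⁺. Consequently, F is metrically regular at x̄ for ȳ if and only if |D*F(x̄|ȳ)⁻¹|⁺ < ∞, which is equivalent to the implication: 0 ∈ D*F(x̄|ȳ)(u) implies u = 0. -/
open Filter Topology Set Metric RealInnerProductSpace
open scoped ENNReal NNReal Pointwise

noncomputable section

section Criterion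

/-- The graph of a set-valued map inside the `ℓ²` product. -/
def l2Graph {E Y : Type*} (Fm : E → Set Y) : Set (WithLp 2 (E × Y)) := {p | p.snd ∈ Fm p.fst}

theorem image_svGraph_eq_l2Graph {E Y : Type*} (Fm : E → Set Y) :
    (WithLp.equiv 2 (E × Y)).symm '' svGraph Fm = l2Graph Fm := by
  ext p
  constructor
  · rintro ⟨q, hq, rfl⟩
    exact hq
  · intro hp
    exact ⟨p.ofLp, hp, rfl⟩

theorem norm_fst_le_of_L2 {E Y : Type*} [SeminormedAddCommGroup E] [SeminormedAddCommGroup Y]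
    (p : WithLp 2 (E × Y)) : ‖p.fst‖ ≤ ‖p‖ := by
  have h := WithLp.prod_norm_sq_eq_of_L2 p
  nlinarith [norm_nonneg p, norm_nonneg p.fst, sq_nonneg ‖p.snd‖]

theorem norm_snd_le_of_L2 {E Y : Type*} [SeminormedAddCommGroup E] [SeminormedAddCommGroup Y]
    (p : WithLp 2 (E × Y)) : ‖p.snd‖ ≤ ‖p‖ := by
  have h := WithLp.prod_norm_sq_eq_of_L2 p
  nlinarith [norm_nonneg p, norm_nonneg p.snd, sq_nonneg ‖p.fst‖]

theorem norm_le_fst_add_snd_of_L2 {E Y : Type*} [SeminormedAddCommGroup E]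
    [SeminormedAddCommGroup Y] (p : WithLp 2 (E × Y)) : ‖p‖ ≤ ‖p.fst‖ + ‖p.snd‖ := by
  have h := WithLp.prod_norm_sq_eq_of_L2 p
  nlinarith [norm_nonneg p, norm_nonneg p.fst, norm_nonneg p.snd,
    mul_nonneg (norm_nonneg p.fst) (norm_nonneg p.snd)]

variable {E Y : Type*} [NormedAddCommGroup E] [InnerProductSpace ℝ E]
  [NormedAddCommGroup Y] [InnerProductSpace ℝ Y]

theorem mem_coDeriv_iff {Fm : E → Set Y} {x : E} {y : Y} {w : E} {z : Y} :
    w ∈ coDeriv Fm x y z ↔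
      WithLp.toLp 2 (w, -z) ∈ limitingNormalCone (l2Graph Fm) (WithLp.toLp 2 (x, y)) := by
  rw [← image_svGraph_eq_l2Graph]
  rfl

theorem inner_eq_fst_add_snd_of_L2 (p q : WithLp 2 (E × Y)) :
    ⟪p, q⟫ = ⟪p.fst, q.fst⟫ + ⟪p.snd, q.snd⟫ :=
  WithLp.prod_inner_apply p q

theorem smul_mem_frechetNormalCone {Ω : Set E} {x v : E} (hv : v ∈ frechetNormalCone Ω x)
    {c : ℝ} (hc : 0 < c) : c • v ∈ frechetNormalCone Ω x := by
  intro ε hε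
  obtain ⟨δ, hδ, h⟩ := hv (ε / c) (div_pos hε hc)
  refine ⟨δ, hδ, fun y hy hyx => ?_⟩
  rw [real_inner_smul_left]
  calc c * ⟪v, y - x⟫ ≤ c * (ε / c * ‖y - x‖) := by gcongr; exact h y hy hyx
    _ = ε * ‖y - x‖ := by field_simp

theorem smul_mem_limitingNormalCone {Ω : Set E} {x v : E} (hv : v ∈ limitingNormalCone Ω x)
    {c : ℝ} (hc : 0 < c) : c • v ∈ limitingNormalCone Ω x := by
  obtain ⟨xk, vk, hxk, hx, hvk, hN⟩ := hv
  exact ⟨xk, fun k => c • vk k, hxk, hx, hvk.const_smul c,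
    fun k => smul_mem_frechetNormalCone (hN k) hc⟩

/-- Metric regularity bounds the Fréchet normals to the graph at a single point. -/
theorem norm_snd_le_of_infEDist_le {Fm : E → Set Y} {κ : ℝ≥0} {p v : WithLp 2 (E × Y)}
    (hreg : ∀ᶠ y in 𝓝 p.snd,
      Metric.infEDist p.fst (svInv Fm y) ≤ (κ : ℝ≥0∞) * Metric.infEDist y (Fm p.fst))
    (hp : p ∈ l2Graph Fm) (hv : v ∈ frechetNormalCone (l2Graph Fm) p) :
    ‖v.snd‖ ≤ κ * ‖v.fst‖ := by
  rcases eq_or_ne v.snd 0 with h0 | h0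
  · rw [h0, norm_zero]; positivity
  have hs : 0 < ‖v.snd‖ := norm_pos_iff.2 h0
  have key : ∀ η : ℝ, 0 < η → ‖v.snd‖ ≤ (κ + η) * ‖v.fst‖ + η * (κ + η + 1) := by
    intro η hη
    obtain ⟨δ, hδ, hN⟩ := hv η hη
    have hcont : Tendsto (fun t : ℝ => p.snd + t • v.snd) (𝓝[>] 0) (𝓝 p.snd) := by
      have : Continuous (fun t : ℝ => p.snd + t • v.snd) := by fun_prop
      simpa using (this.tendsto 0).mono_left nhdsWithin_le_nhds
    have hsmall : ∀ᶠ t : ℝ in 𝓝[>] 0, t * ‖v.snd‖ * (κ + η + 1) < δ := by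
      have : Continuous (fun t : ℝ => t * ‖v.snd‖ * (κ + η + 1)) := by fun_prop
      have h2 := (this.tendsto 0).mono_left (nhdsWithin_le_nhds (s := Ioi 0))
      simp only [zero_mul] at h2
      exact h2.eventually_lt_const hδ
    obtain ⟨t, ⟨hreg', hts⟩, ht⟩ :=
      (((hcont.eventually hreg).and hsmall).and self_mem_nhdsWithin).exists
    have ht : 0 < t := ht
    have hts0 : 0 < t * ‖v.snd‖ := mul_pos ht hs
    have hdist : Metric.infEDist p.fst (svInv Fm (p.snd + t • v.snd)) <
        ENNReal.ofReal ((κ + η) * (t * ‖v.snd‖)) := by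
      refine hreg'.trans_lt ?_
      calc (κ : ℝ≥0∞) * Metric.infEDist (p.snd + t • v.snd) (Fm p.fst)
          ≤ κ * edist (p.snd + t • v.snd) p.snd := by
            gcongr; exact Metric.infEDist_le_edist_of_mem hp
        _ = ENNReal.ofReal (κ * (t * ‖v.snd‖)) := by
            rw [edist_dist, dist_eq_norm, add_sub_cancel_left, norm_smul, Real.norm_of_nonneg ht.le,
              ENNReal.ofReal_mul κ.coe_nonneg, ENNReal.ofReal_coe_nnreal]
        _ < _ := by
            rw [ENNReal.ofReal_lt_ofReal_iff (by positivity)]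
            gcongr; linarith
    obtain ⟨x', hx', hxx'⟩ := Metric.infEDist_lt_iff.1 hdist
    rw [edist_dist, ENNReal.ofReal_lt_ofReal_iff (by positivity), dist_comm, dist_eq_norm] at hxx'
    set q : WithLp 2 (E × Y) := WithLp.toLp 2 (x', p.snd + t • v.snd) with hq
    have hq1 : (q - p).fst = x' - p.fst := rfl
    have hq2 : (q - p).snd = t • v.snd := by
      change p.snd + t • v.snd - p.snd = _
      rw [add_sub_cancel_left]
    have hq2n : ‖(q - p).snd‖ = t * ‖v.snd‖ := by
      rw [hq2, norm_smul, Real.norm_of_nonneg ht.le]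
    have hqp : ‖q - p‖ ≤ t * ‖v.snd‖ * (κ + η + 1) := by
      have := norm_le_fst_add_snd_of_L2 (q - p)
      rw [hq2n, hq1] at this
      nlinarith
    have h := hN q hx' (hqp.trans_lt hts)
    rw [inner_eq_fst_add_snd_of_L2, hq1, hq2, real_inner_smul_right,
      real_inner_self_eq_norm_sq] at h
    have hin : -(‖v.fst‖ * ((κ + η) * (t * ‖v.snd‖))) ≤ ⟪v.fst, x' - p.fst⟫ := by
      have h1 := neg_le_of_abs_le (abs_real_inner_le_norm v.fst (x' - p.fst))
      have h2 : ‖v.fst‖ * ‖x' - p.fst‖ ≤ ‖v.fst‖ * ((κ + η) * (t * ‖v.snd‖)) := by gcongr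
      linarith
    have h3 : η * ‖q - p‖ ≤ η * (t * ‖v.snd‖ * (κ + η + 1)) := by gcongr
    refine le_of_mul_le_mul_left ?_ hts0
    nlinarith
  have hlim : Tendsto (fun η : ℝ => (κ + η) * ‖v.fst‖ + η * (κ + η + 1)) (𝓝[>] 0)
      (𝓝 (κ * ‖v.fst‖)) := by
    have : Continuous (fun η : ℝ => ((κ : ℝ) + η) * ‖v.fst‖ + η * (κ + η + 1)) := by fun_prop
    simpa using (this.tendsto 0).mono_left (nhdsWithin_le_nhds (s := Ioi 0))
  exact ge_of_tendsto hlim (eventually_mem_nhdsWithin.mono key)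

theorem norm_snd_le_of_metrRegWith {Fm : E → Set Y} {κ : ℝ≥0} {xbar : E} {ybar : Y}
    (hreg : MetrRegWith κ Fm xbar ybar) {v : WithLp 2 (E × Y)}
    (hv : v ∈ limitingNormalCone (l2Graph Fm) (WithLp.toLp 2 (xbar, ybar))) :
    ‖v.snd‖ ≤ κ * ‖v.fst‖ := by
  obtain ⟨U, hU, V, hV, h⟩ := hreg
  obtain ⟨pk, vk, hpk, hp, hvk, hN⟩ := hv
  have hp1 : Tendsto (fun k => (pk k).fst) atTop (𝓝 xbar) :=
    ((WithLp.continuous_fst 2 E Y).tendsto _).comp hp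
  have hp2 : Tendsto (fun k => (pk k).snd) atTop (𝓝 ybar) :=
    ((WithLp.continuous_snd 2 E Y).tendsto _).comp hp
  have hv1 : Tendsto (fun k => (vk k).fst) atTop (𝓝 v.fst) :=
    ((WithLp.continuous_fst 2 E Y).tendsto _).comp hvk
  have hv2 : Tendsto (fun k => (vk k).snd) atTop (𝓝 v.snd) :=
    ((WithLp.continuous_snd 2 E Y).tendsto _).comp hvk
  refine le_of_tendsto_of_tendsto hv2.norm (hv1.norm.const_mul _) ?_
  filter_upwards [hp1 hU, hp2.eventually (eventually_eventually_nhds.2 hV)] with k hk1 hk2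
  exact norm_snd_le_of_infEDist_le (hk2.mono fun y hy => h _ hk1 y hy) (hpk k) (hN k)

theorem outerNormSV_le_of_metrRegWith {Fm : E → Set Y} {κ : ℝ≥0} {xbar : E} {ybar : Y}
    (hreg : MetrRegWith κ Fm xbar ybar) :
    outerNormSV (svInv (coDeriv Fm xbar ybar)) ≤ κ := by
  refine iSup₂_le fun w hw => iSup₂_le fun u hu => ?_
  have h := norm_snd_le_of_metrRegWith hreg (mem_coDeriv_iff.1 hu)
  change ‖-u‖ ≤ κ * ‖w‖ at h
  rw [norm_neg] at h
  have h2 : ‖u‖ ≤ κ := h.trans (mul_le_of_le_one_right κ.2 hw)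
  exact_mod_cast h2

/-- If non-regularity persists along graph points approaching the reference point, a nonzero
limiting normal arises. -/
theorem exists_limitingNormal [FiniteDimensional ℝ E] [FiniteDimensional ℝ Y]
    {Ω : Set (WithLp 2 (E × Y))} {pbar : WithLp 2 (E × Y)} {τ : ℕ → ℝ} {c : ℝ}
    (hτ : Tendsto τ atTop (𝓝 c))
    (h : ∀ k, ¬ ∀ᶠ p in 𝓝 pbar, p ∈ Ω → ∀ v ∈ frechetNormalCone Ω p,
      τ k * ‖v.snd‖ ≤ ‖v.fst‖) :
    ∃ v ∈ limitingNormalCone Ω pbar, ‖v.snd‖ = 1 ∧ ‖v.fst‖ ≤ c := by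
  have hex : ∀ k : ℕ, ∃ p ∈ Ω, dist p pbar < 1 / ((k : ℝ) + 1) ∧
      ∃ v ∈ frechetNormalCone Ω p, ‖v.snd‖ = 1 ∧ ‖v.fst‖ ≤ τ k := by
    intro k
    have hk := h k
    rw [Metric.eventually_nhds_iff] at hk
    push Not at hk
    obtain ⟨p, hpd, hp, v, hv, hlt⟩ := hk (1 / ((k : ℝ) + 1)) (by positivity)
    have hs : 0 < ‖v.snd‖ := by
      rw [norm_pos_iff]
      intro h0
      rw [h0, norm_zero, mul_zero] at hlt
      exact (norm_nonneg _).not_gt hlt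
    refine ⟨p, hp, hpd, ‖v.snd‖⁻¹ • v, smul_mem_frechetNormalCone hv (inv_pos.2 hs), ?_, ?_⟩
    · rw [WithLp.smul_snd, norm_smul, norm_inv, norm_norm, inv_mul_cancel₀ hs.ne']
    · rw [WithLp.smul_fst, norm_smul, norm_inv, norm_norm, inv_mul_le_iff₀ hs, mul_comm]
      exact hlt.le
  choose p hp hpd v hv hv2 hv1 using hex
  obtain ⟨C, hC⟩ := hτ.bddAbove_range
  have hbd : ∀ k, v k ∈ Metric.closedBall (0 : WithLp 2 (E × Y)) (C + 1) := fun k => by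
    rw [mem_closedBall_zero_iff]
    have h1 := norm_le_fst_add_snd_of_L2 (v k)
    have h2 := hC (mem_range_self k)
    linarith [hv1 k, hv2 k]
  obtain ⟨a, -, φ, hφ, ha⟩ := tendsto_subseq_of_bounded Metric.isBounded_closedBall hbd
  have hplim : Tendsto p atTop (𝓝 pbar) := by
    rw [tendsto_iff_dist_tendsto_zero]
    exact squeeze_zero (fun _ => dist_nonneg) (fun k => (hpd k).le)
      tendsto_one_div_add_atTop_nhds_zero_nat
  have ha1 : Tendsto (fun k => (v (φ k)).fst) atTop (𝓝 a.fst) :=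
    ((WithLp.continuous_fst 2 E Y).tendsto _).comp ha
  have ha2 : Tendsto (fun k => (v (φ k)).snd) atTop (𝓝 a.snd) :=
    ((WithLp.continuous_snd 2 E Y).tendsto _).comp ha
  refine ⟨a, ⟨p ∘ φ, v ∘ φ, fun k => hp _, hplim.comp hφ.tendsto_atTop, ha, fun k => hv _⟩, ?_, ?_⟩
  · refine tendsto_nhds_unique ha2.norm ?_
    simp only [hv2]
    exact tendsto_const_nhds
  · exact le_of_tendsto_of_tendsto' ha1.norm (hτ.comp hφ.tendsto_atTop) fun k => hv1 (φ k)

theorem hasGradientAt_sqrt_norm_sub_sq_add [CompleteSpace E] (x₀ x : E) (c : ℝ)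
    (h : ‖x - x₀‖ ^ 2 + c ≠ 0) :
    HasGradientAt (fun z => √(‖z - x₀‖ ^ 2 + c)) ((√(‖x - x₀‖ ^ 2 + c))⁻¹ • (x - x₀)) x := by
  rw [hasGradientAt_iff_hasFDerivAt]
  have h1 := ((((hasFDerivAt_id (𝕜 := ℝ) x).sub_const x₀).norm_sq).add_const c).sqrt h
  refine h1.congr_fderiv ?_
  ext z
  simp
  ring

/-- Fermat rule: a local minimizer on `Ω` of a separable function carries the negative gradient
as a Fréchet normal. -/
theorem neg_gradient_mem_frechetNormalCone [CompleteSpace E] [CompleteSpace Y]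
    {Ω : Set (WithLp 2 (E × Y))} {p : WithLp 2 (E × Y)} {f : E → ℝ} {g : Y → ℝ} {a : E} {b : Y}
    (hf : HasGradientAt f a p.fst) (hg : HasGradientAt g b p.snd)
    (hmin : ∀ᶠ q in 𝓝 p, q ∈ Ω → f p.fst + g p.snd ≤ f q.fst + g q.snd) :
    WithLp.toLp 2 (-a, -b) ∈ frechetNormalCone Ω p := by
  intro ε hε
  have hf' := (hasGradientAt_iff_isLittleO.1 hf).def (half_pos hε)
  have hg' := (hasGradientAt_iff_isLittleO.1 hg).def (half_pos hε)
  have hf'' := ((WithLp.continuous_fst 2 E Y).tendsto p).eventually hf'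
  have hg'' := ((WithLp.continuous_snd 2 E Y).tendsto p).eventually hg'
  obtain ⟨δ, hδ, H⟩ := Metric.eventually_nhds_iff.1 (hmin.and (hf''.and hg''))
  refine ⟨δ, hδ, fun q hq hqp => ?_⟩
  obtain ⟨h1, h2, h3⟩ := H (by rwa [dist_eq_norm])
  have h1 := h1 hq
  have h2 := (abs_le.1 h2).2
  have h3 := (abs_le.1 h3).2
  have h4 := norm_fst_le_of_L2 (q - p)
  have h5 := norm_snd_le_of_L2 (q - p)
  rw [inner_eq_fst_add_snd_of_L2]
  rw [WithLp.sub_fst] at h4 ⊢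
  rw [WithLp.sub_snd] at h5 ⊢
  simp only [WithLp.toLp_fst, WithLp.toLp_snd, inner_neg_left]
  nlinarith

/-- Solvability of `y ∈ F x` near a graph point, from a uniform bound on Fréchet normals. -/
theorem exists_mem_of_frechet_bound [FiniteDimensional ℝ E] [FiniteDimensional ℝ Y]
    {Fm : E → Set Y} {xbar x₀ : E} {ybar y₀ y : Y} {r ρ τ δ : ℝ}
    (hclosed : IsClosed (svGraph Fm ∩ closedBall (xbar, ybar) r)) (hτ : 0 < τ)
    (hN : ∀ p ∈ l2Graph Fm, dist p.fst xbar < r → dist p.snd ybar < r →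
      ∀ v ∈ frechetNormalCone (l2Graph Fm) p, τ * ‖v.snd‖ ≤ ‖v.fst‖)
    (hρ : 4 * ρ ≤ r) (hρ' : 2 * ρ * (τ + 1) ≤ τ * r)
    (hx₀ : dist x₀ xbar < ρ) (hy₀ : dist y₀ ybar < ρ) (hy : dist y ybar < ρ)
    (hgr : y₀ ∈ Fm x₀) (hδ : 0 < δ) (hδρ : δ ≤ ρ) (hδτ : τ * δ ≤ ρ) :
    ∃ x, y ∈ Fm x ∧ τ * ‖x - x₀‖ ≤ ‖y₀ - y‖ + τ * δ := by
  have : ProperSpace E := FiniteDimensional.proper ℝ E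
  have : ProperSpace Y := FiniteDimensional.proper ℝ Y
  have hρ0 : 0 < ρ := dist_nonneg.trans_lt hx₀
  have hK : IsCompact (svGraph Fm ∩ closedBall (xbar, ybar) r) :=
    (isCompact_closedBall _ _).of_isClosed_subset hclosed inter_subset_right
  have hmem : (x₀, y₀) ∈ svGraph Fm ∩ closedBall (xbar, ybar) r :=
    ⟨hgr, by rw [mem_closedBall, Prod.dist_eq]; exact max_le (by linarith) (by linarith)⟩
  let f : E → ℝ := fun x => √(‖x - x₀‖ ^ 2 + δ ^ 2)
  let g : Y → ℝ := fun v => √(‖v - y‖ ^ 2 + 0)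
  have hg : ∀ v, g v = ‖v - y‖ := fun v => by simp [g]
  have hf : ∀ x, ‖x - x₀‖ < f x := fun x =>
    Real.lt_sqrt_of_sq_lt (by nlinarith [sq_pos_of_pos hδ])
  obtain ⟨⟨x₁, v₁⟩, ⟨hgr₁, -⟩, hmin⟩ := hK.exists_isMinOn ⟨_, hmem⟩
    (f := fun q : E × Y => τ * f q.1 + g q.2) (by fun_prop)
  have hle : τ * f x₁ + ‖v₁ - y‖ ≤ τ * δ + ‖y₀ - y‖ := by
    have h := hmin hmem
    have h0 : f x₀ = δ := by simp [f, Real.sqrt_sq hδ.le]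
    simpa only [mem_ofPred_eq, hg, h0] using h
  have hτx : τ * ‖x₁ - x₀‖ ≤ τ * f x₁ := by gcongr; exact (hf x₁).le
  rcases eq_or_ne v₁ y with rfl | hne
  · exact ⟨x₁, hgr₁, by linarith [norm_nonneg (v₁ - v₁)]⟩
  exfalso
  have hyy : ‖y₀ - y‖ < 2 * ρ := by
    rw [← dist_eq_norm]
    linarith [dist_triangle_right y₀ y ybar]
  have hv₁ : dist v₁ ybar < r := by
    have h1 := dist_triangle v₁ y ybar
    rw [dist_eq_norm v₁ y] at h1
    have : 0 ≤ τ * ‖x₁ - x₀‖ := by positivity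
    linarith
  have hx₁ : dist x₁ xbar < r := by
    have h1 := dist_triangle x₁ x₀ xbar
    rw [dist_eq_norm x₁ x₀] at h1
    have h2 : τ * ‖x₁ - x₀‖ < τ * δ + 2 * ρ := by linarith [norm_nonneg (v₁ - y)]
    refine lt_of_mul_lt_mul_left ?_ hτ.le
    calc τ * dist x₁ xbar ≤ τ * (‖x₁ - x₀‖ + dist x₀ xbar) := by gcongr
      _ < τ * δ + 2 * ρ + τ * ρ := by nlinarith
      _ ≤ τ * r := by nlinarith
  have hpos : 0 < ‖v₁ - y‖ := norm_pos_iff.2 (sub_ne_zero.2 hne)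
  have hfpos : 0 < f x₁ := (norm_nonneg _).trans_lt (hf x₁)
  have hgradf : HasGradientAt (fun z => τ * f z) (τ • (f x₁)⁻¹ • (x₁ - x₀)) x₁ := by
    rw [hasGradientAt_iff_hasFDerivAt, map_smul]
    exact (hasGradientAt_sqrt_norm_sub_sq_add x₀ x₁ (δ ^ 2)
      (by positivity)).hasFDerivAt.const_mul τ
  have hgradg := hasGradientAt_sqrt_norm_sub_sq_add y v₁ 0 (by positivity)
  have hnormal := neg_gradient_mem_frechetNormalCone (Ω := l2Graph Fm)
    (p := WithLp.toLp 2 (x₁, v₁)) hgradf hgradg (by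
      have e1 : ∀ᶠ q : WithLp 2 (E × Y) in 𝓝 (WithLp.toLp 2 (x₁, v₁)), dist q.fst xbar < r :=
        (((WithLp.continuous_fst 2 E Y).dist continuous_const).tendsto _).eventually_lt_const hx₁
      have e2 : ∀ᶠ q : WithLp 2 (E × Y) in 𝓝 (WithLp.toLp 2 (x₁, v₁)), dist q.snd ybar < r :=
        (((WithLp.continuous_snd 2 E Y).dist continuous_const).tendsto _).eventually_lt_const hv₁
      filter_upwards [e1, e2] with q h1 h2 hq
      have hqK : q.ofLp ∈ svGraph Fm ∩ closedBall (xbar, ybar) r :=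
        ⟨hq, by rw [mem_closedBall, Prod.dist_eq]; exact max_le h1.le h2.le⟩
      exact hmin hqK)
  have h := hN _ hgr₁ hx₁ hv₁ _ hnormal
  simp only [WithLp.toLp_fst, WithLp.toLp_snd, norm_neg, norm_smul, norm_inv] at h
  change τ * (‖g v₁‖⁻¹ * ‖v₁ - y‖) ≤ ‖τ‖ * (‖f x₁‖⁻¹ * ‖x₁ - x₀‖) at h
  rw [hg, norm_norm, inv_mul_cancel₀ hpos.ne', Real.norm_of_nonneg hτ.le,
    Real.norm_of_nonneg hfpos.le] at h
  have h1 := le_of_mul_le_mul_left h hτ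
  rw [← div_eq_inv_mul, le_div_iff₀ hfpos] at h1
  linarith [hf x₁]

/-- A uniform bound on the Fréchet normals to a locally closed graph yields metric regularity. -/
theorem metrRegWith_of_frechet_bound [FiniteDimensional ℝ E] [FiniteDimensional ℝ Y]
    {Fm : E → Set Y} {xbar : E} {ybar : Y} (hgr : ybar ∈ Fm xbar)
    (hloc : LocClosedAt (svGraph Fm) (xbar, ybar)) {κ : ℝ≥0} (hκ : 0 < κ)
    (hN : ∀ᶠ p in 𝓝 (WithLp.toLp 2 (xbar, ybar)), p ∈ l2Graph Fm →
      ∀ v ∈ frechetNormalCone (l2Graph Fm) p, (κ : ℝ)⁻¹ * ‖v.snd‖ ≤ ‖v.fst‖) :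
    MetrRegWith κ Fm xbar ybar := by
  obtain ⟨r₁, hr₁, hcl⟩ := hloc
  obtain ⟨r₂, hr₂, hN⟩ := Metric.eventually_nhds_iff.1 hN
  have hκ' : (0 : ℝ) < κ := hκ
  set τ : ℝ := (κ : ℝ)⁻¹ with hτdef
  have hτ : 0 < τ := inv_pos.2 hκ'
  have hκτ : (κ : ℝ) * τ = 1 := mul_inv_cancel₀ hκ'.ne'
  set r := min r₁ (r₂ / 2) with hr
  have hr0 : 0 < r := lt_min hr₁ (half_pos hr₂)
  have hclosed : IsClosed (svGraph Fm ∩ closedBall (xbar, ybar) r) := by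
    have : svGraph Fm ∩ closedBall (xbar, ybar) r =
        (svGraph Fm ∩ closedBall (xbar, ybar) r₁) ∩ closedBall (xbar, ybar) r := by
      rw [inter_assoc, inter_eq_right.2 (closedBall_subset_closedBall (min_le_left _ _))]
    rw [this]
    exact hcl.inter isClosed_closedBall
  have hN' : ∀ p ∈ l2Graph Fm, dist p.fst xbar < r → dist p.snd ybar < r →
      ∀ v ∈ frechetNormalCone (l2Graph Fm) p, τ * ‖v.snd‖ ≤ ‖v.fst‖ := by
    intro p hp h1 h2
    refine hN ?_ hp
    have h3 : dist p (WithLp.toLp 2 (xbar, ybar)) ≤ dist p.fst xbar + dist p.snd ybar := by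
      simpa [dist_eq_norm] using norm_le_fst_add_snd_of_L2 (p - WithLp.toLp 2 (xbar, ybar))
    linarith [min_le_right r₁ (r₂ / 2)]
  set ρ := min (r / 4) (τ * r / (2 * (τ + 1))) with hρdef
  have hρ0 : 0 < ρ := lt_min (by positivity) (by positivity)
  have hρ : 4 * ρ ≤ r := by linarith [min_le_left (r / 4) (τ * r / (2 * (τ + 1)))]
  have hρ' : 2 * ρ * (τ + 1) ≤ τ * r := by
    have h := min_le_right (r / 4) (τ * r / (2 * (τ + 1)))
    rw [← hρdef, le_div_iff₀ (by positivity)] at h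
    linarith
  have haubin : ∀ x₀ y₀ y, dist x₀ xbar < ρ → dist y₀ ybar < ρ → dist y ybar < ρ → y₀ ∈ Fm x₀ →
      Metric.infEDist x₀ (svInv Fm y) ≤ κ * edist y y₀ := by
    intro x₀ y₀ y hx₀ hy₀ hy hmem
    have hreal : (κ : ℝ≥0∞) * edist y y₀ = ENNReal.ofReal (κ * ‖y₀ - y‖) := by
      rw [edist_comm, edist_dist, dist_eq_norm, ENNReal.ofReal_mul κ.coe_nonneg, ENNReal.ofReal_coe_nnreal]
    rw [hreal]
    refine ENNReal.le_of_forall_pos_le_add fun ε hε _ => ?_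
    set δ : ℝ := min ε (min ρ (ρ / τ)) with hδ
    have hε' : (0 : ℝ) < ε := hε
    have hδ0 : 0 < δ := lt_min hε' (lt_min hρ0 (by positivity))
    have hδρ : δ ≤ ρ := (min_le_right _ _).trans (min_le_left _ _)
    have hδτ : τ * δ ≤ ρ := by
      have : δ ≤ ρ / τ := (min_le_right _ _).trans (min_le_right _ _)
      rw [le_div_iff₀ hτ] at this
      linarith
    obtain ⟨x, hx, hxle⟩ := exists_mem_of_frechet_bound hclosed hτ hN' hρ hρ' hx₀ hy₀ hy hmem
      hδ0 hδρ hδτ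
    have hxle' : ‖x - x₀‖ ≤ κ * ‖y₀ - y‖ + ε := by
      have h1 := mul_le_mul_of_nonneg_left hxle hκ'.le
      rw [mul_add, ← mul_assoc, ← mul_assoc, hκτ, one_mul, one_mul] at h1
      exact h1.trans (by gcongr; exact min_le_left _ _)
    calc Metric.infEDist x₀ (svInv Fm y) ≤ edist x₀ x := Metric.infEDist_le_edist_of_mem hx
      _ = ENNReal.ofReal ‖x - x₀‖ := by rw [edist_comm, edist_dist, dist_eq_norm]
      _ ≤ ENNReal.ofReal (κ * ‖y₀ - y‖ + ε) := ENNReal.ofReal_le_ofReal hxle'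
      _ = _ := by rw [ENNReal.ofReal_add (by positivity) ε.coe_nonneg, ENNReal.ofReal_coe_nnreal]
  set σ : ℝ := κ * ρ / (1 + 2 * κ) with hσ
  have hσ0 : 0 < σ := by positivity
  have hσeq : σ * (1 + 2 * κ) = κ * ρ := div_mul_cancel₀ _ (by positivity)
  have hσρ : σ < ρ := by nlinarith
  refine ⟨ball xbar σ, ball_mem_nhds _ hσ0, ball ybar σ, ball_mem_nhds _ hσ0,
    fun x hx y hy => ?_⟩
  rw [mem_ball] at hx hy
  change Metric.infEDist x (svInv Fm y) ≤ (κ : ℝ≥0∞) * ⨅ z ∈ Fm x, edist y z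
  rw [ENNReal.mul_iInf_of_ne (by exact_mod_cast hκ.ne') ENNReal.coe_ne_top]
  refine le_iInf fun z => ?_
  rw [ENNReal.mul_iInf_of_ne (by exact_mod_cast hκ.ne') ENNReal.coe_ne_top]
  refine le_iInf fun hz => ?_
  by_cases hzρ : dist z ybar < ρ
  · exact haubin x z y (hx.trans hσρ) hzρ (hy.trans hσρ) hz
  · push Not at hzρ
    have hyz : ρ - σ ≤ dist y z := by
      have := dist_triangle_left z ybar y
      linarith
    have h1 := haubin xbar ybar y (by simpa using hρ0) (by simpa using hρ0) (hy.trans hσρ) hgr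
    calc Metric.infEDist x (svInv Fm y)
        ≤ edist x xbar + Metric.infEDist xbar (svInv Fm y) := Metric.infEDist_le_edist_add_infEDist
      _ ≤ edist x xbar + κ * edist y ybar := by gcongr
      _ = ENNReal.ofReal (dist x xbar + κ * dist y ybar) := by
          rw [edist_dist, edist_dist, ENNReal.ofReal_add dist_nonneg (by positivity),
            ENNReal.ofReal_mul κ.coe_nonneg, ENNReal.ofReal_coe_nnreal]
      _ ≤ ENNReal.ofReal (κ * dist y z) := ENNReal.ofReal_le_ofReal (by nlinarith)
      _ = κ * edist y z := by
          rw [edist_dist, ENNReal.ofReal_mul κ.coe_nonneg, ENNReal.ofReal_coe_nnreal]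

theorem metrRegWith_of_outerNormSV_lt [FiniteDimensional ℝ E] [FiniteDimensional ℝ Y]
    {Fm : E → Set Y} {xbar : E} {ybar : Y} (hgr : ybar ∈ Fm xbar)
    (hloc : LocClosedAt (svGraph Fm) (xbar, ybar)) {κ : ℝ≥0}
    (hκ : outerNormSV (svInv (coDeriv Fm xbar ybar)) < κ) :
    MetrRegWith κ Fm xbar ybar := by
  have hκ0 : 0 < κ := by exact_mod_cast zero_le.trans_lt hκ
  have hκ' : (0 : ℝ) < κ := hκ0
  refine metrRegWith_of_frechet_bound hgr hloc hκ0 ?_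
  by_contra hcon
  obtain ⟨v, hv, hv2, hv1⟩ := exists_limitingNormal
    (tendsto_const_nhds (x := (κ : ℝ)⁻¹) (f := atTop (α := ℕ))) fun _ => hcon
  have hmem : -((κ : ℝ) • v.snd) ∈ svInv (coDeriv Fm xbar ybar) ((κ : ℝ) • v.fst) := by
    refine mem_coDeriv_iff.2 ?_
    rw [neg_neg]
    exact smul_mem_limitingNormalCone hv hκ'
  have hle : ‖(κ : ℝ) • v.fst‖ ≤ 1 := by
    rw [norm_smul, Real.norm_of_nonneg hκ'.le]
    calc (κ : ℝ) * ‖v.fst‖ ≤ κ * (κ : ℝ)⁻¹ := by gcongr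
      _ = 1 := mul_inv_cancel₀ hκ'.ne'
  have hnorm : ‖-((κ : ℝ) • v.snd)‖₊ = κ := by
    ext
    rw [coe_nnnorm, norm_neg, norm_smul, hv2, mul_one, Real.norm_of_nonneg hκ'.le]
  refine hκ.not_ge ?_
  conv_lhs => rw [← hnorm]
  exact le_iSup₂_of_le _ hle (le_iSup₂_of_le (f := fun y _ => (‖y‖₊ : ℝ≥0∞)) _ hmem le_rfl)

theorem exists_metrRegWith_of_coDeriv_injective [FiniteDimensional ℝ E] [FiniteDimensional ℝ Y]
    {Fm : E → Set Y} {xbar : E} {ybar : Y} (hgr : ybar ∈ Fm xbar)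
    (hloc : LocClosedAt (svGraph Fm) (xbar, ybar))
    (h : ∀ u, (0 : E) ∈ coDeriv Fm xbar ybar u → u = 0) :
    ∃ κ : ℝ≥0, MetrRegWith κ Fm xbar ybar := by
  by_contra hcon
  push Not at hcon
  have hlim : Tendsto (fun k : ℕ => (((k : ℝ≥0) + 1 : ℝ≥0) : ℝ)⁻¹) atTop (𝓝 0) := by
    simpa using tendsto_one_div_add_atTop_nhds_zero_nat (𝕜 := ℝ)
  obtain ⟨v, hv, hv2, hv1⟩ := exists_limitingNormal hlim fun k hk =>
    hcon _ (metrRegWith_of_frechet_bound hgr hloc (by positivity) hk)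
  have hv0 : v.fst = 0 := norm_le_zero_iff.1 hv1
  have h0 : -v.snd = 0 := by
    refine h _ (mem_coDeriv_iff.2 ?_)
    rw [neg_neg, ← hv0]
    exact hv
  rw [neg_eq_zero.1 h0, norm_zero] at hv2
  exact zero_ne_one hv2

theorem outerNormSV_eq_top_of_coDeriv_zero {Fm : E → Set Y} {xbar : E} {ybar : Y} {u : Y}
    (hu : (0 : E) ∈ coDeriv Fm xbar ybar u) (hu0 : u ≠ 0) :
    outerNormSV (svInv (coDeriv Fm xbar ybar)) = ⊤ := by
  refine ENNReal.eq_top_of_forall_nnreal_le fun c => ?_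
  have hpos : 0 < ‖u‖ := norm_pos_iff.2 hu0
  set t : ℝ := (c + 1) / ‖u‖ with ht
  have ht0 : 0 < t := by positivity
  have hmem : t • u ∈ svInv (coDeriv Fm xbar ybar) 0 := by
    refine mem_coDeriv_iff.2 ?_
    have h := smul_mem_limitingNormalCone (mem_coDeriv_iff.1 hu) ht0
    rwa [← WithLp.toLp_smul, Prod.smul_mk, smul_zero, smul_neg] at h
  have hc : c ≤ ‖t • u‖₊ := by
    rw [← NNReal.coe_le_coe, coe_nnnorm, norm_smul, Real.norm_of_nonneg ht0.le, ht,
      div_mul_cancel₀ _ hpos.ne']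
    linarith
  calc (c : ℝ≥0∞) ≤ ‖t • u‖₊ := by exact_mod_cast hc
    _ ≤ _ := le_iSup₂_of_le (0 : E) (by simp)
      (le_iSup₂_of_le (f := fun y _ => (‖y‖₊ : ℝ≥0∞)) _ hmem le_rfl)

end Criterion

/-- Coderivative criterion for metric regularity:
`reg (F; xbar|ybar) = |D*F(xbar|ybar)⁻¹|⁺`, with the equivalent conditions. -/
theorem coDeriv_criterion_for_metric_regularity {n m : ℕ}
    (Fm : EuclideanSpace ℝ (Fin n) → Set (EuclideanSpace ℝ (Fin m)))
    (xbar : EuclideanSpace ℝ (Fin n)) (ybar : EuclideanSpace ℝ (Fin m))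
    (hgr : ybar ∈ Fm xbar) (hloc : LocClosedAt (svGraph Fm) (xbar, ybar)) :
    regMod Fm xbar ybar = outerNormSV (svInv (coDeriv Fm xbar ybar)) ∧
    ((∃ κ : ℝ≥0, MetrRegWith κ Fm xbar ybar) ↔
      outerNormSV (svInv (coDeriv Fm xbar ybar)) < ⊤) ∧
    (outerNormSV (svInv (coDeriv Fm xbar ybar)) < ⊤ ↔
      ∀ u, (0 : EuclideanSpace ℝ (Fin n)) ∈ coDeriv Fm xbar ybar u → u = 0) := by
  have hle : ∀ κ : ℝ≥0, MetrRegWith κ Fm xbar ybar →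
      outerNormSV (svInv (coDeriv Fm xbar ybar)) ≤ κ := fun _ => outerNormSV_le_of_metrRegWith
  have hlt : outerNormSV (svInv (coDeriv Fm xbar ybar)) < ⊤ →
      ∃ κ : ℝ≥0, MetrRegWith κ Fm xbar ybar := fun h => by
    obtain ⟨κ, hκ, -⟩ := ENNReal.lt_iff_exists_nnreal_btwn.1 h
    exact ⟨κ, metrRegWith_of_outerNormSV_lt hgr hloc hκ⟩
  refine ⟨le_antisymm (le_of_forall_gt fun a ha => ?_) (le_iInf₂ hle),
    ⟨fun ⟨κ, hκ⟩ => (hle κ hκ).trans_lt ENNReal.coe_lt_top, hlt⟩, fun h u hu => ?_, fun h => ?_⟩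
  · obtain ⟨κ, hκ, hκa⟩ := ENNReal.lt_iff_exists_nnreal_btwn.1 ha
    exact (iInf₂_le κ (metrRegWith_of_outerNormSV_lt hgr hloc hκ)).trans_lt hκa
  · by_contra hu0
    exact h.ne (outerNormSV_eq_top_of_coDeriv_zero hu hu0)
  · obtain ⟨κ, hκ⟩ := exists_metrRegWith_of_coDeriv_injective hgr hloc h
    exact (hle κ hκ).trans_lt ENNReal.coe_lt_top

end
end

section
/- Let S : ℝᵐ ⇉ ℝⁿ be a set-valued map and (ȳ, x̄) ∈ gph S a point at which gph S is locally closed. Then lip(S; ȳ|x̄) = limsup, over (y,x) → (ȳ,x̄) with (y,x) ∈ gph S, of |DS(y|x)|⁻. In particular, S has the Aubin property at ȳ for x̄ if and only if this limsup is finite. -/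
open Filter Topology Set Metric RealInnerProductSpace
open scoped ENNReal NNReal Pointwise

noncomputable section

section Criterion

variable {F E : Type*} [NormedAddCommGroup F] [NormedAddCommGroup E]

/-- An element of norm `< κ` exists in the values of a map of inner norm `< κ` on the unit ball. -/
theorem exists_mem_norm_lt_of_innerNormSV_lt {H : F → Set E} {κ : ℝ≥0}
    (h : innerNormSV H < κ) {u : F} (hu : ‖u‖ ≤ 1) : ∃ v ∈ H u, ‖v‖ < κ := by
  have hlt : ⨅ (v : E) (_ : v ∈ H u), (‖v‖₊ : ℝ≥0∞) < κ :=
    (le_iSup₂ (f := fun (x : F) (_ : ‖x‖ ≤ 1) => ⨅ (y : E) (_ : y ∈ H x), (‖y‖₊ : ℝ≥0∞))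
      u hu).trans_lt h
  simp only [iInf_lt_iff] at hlt
  obtain ⟨v, hv, hvκ⟩ := hlt
  exact ⟨v, hv, by exact_mod_cast hvκ⟩

/-- The Aubin property holds with some constant iff the Lipschitz modulus is finite. -/
theorem exists_aubinWith_iff_lipMod_lt_top {S : F → Set E} {ybar : F} {xbar : E} :
    (∃ κ : ℝ≥0, AubinWith κ S ybar xbar) ↔ lipMod S ybar xbar < ⊤ := by
  simp [lipMod, iInf_lt_iff]

variable [NormedSpace ℝ F] [NormedSpace ℝ E]

/-- If `x + t • v ∈ S (y + t • u)` is solvable with `‖v‖ ≤ κ` for all small `t > 0`, then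
`DS(y|x)(u)` contains an element of norm at most `κ`. -/
theorem exists_mem_gDeriv_norm_le [ProperSpace E] {S : F → Set E} {y u : F} {x : E} {κ : ℝ}
    (h : ∀ᶠ t in 𝓝[>] (0 : ℝ), ∃ v : E, ‖v‖ ≤ κ ∧ x + t • v ∈ S (y + t • u)) :
    ∃ v ∈ gDeriv S y x u, ‖v‖ ≤ κ := by
  obtain ⟨t, -, htpos, htlim⟩ := exists_seq_strictAnti_tendsto (0 : ℝ)
  have htlim' : Tendsto t atTop (𝓝[>] 0) :=
    tendsto_nhdsWithin_iff.2 ⟨htlim, Eventually.of_forall htpos⟩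
  obtain ⟨N, hN⟩ := eventually_atTop.1 (htlim'.eventually h)
  choose v hvκ hvS using fun k => hN (k + N) (Nat.le_add_left N k)
  obtain ⟨a, ha, φ, hφ, hlim⟩ := (isCompact_closedBall (0 : E) κ).tendsto_subseq
    (fun k => mem_closedBall_zero_iff.2 (hvκ k))
  refine ⟨a, ⟨fun k => t (φ k + N), fun k => (u, v (φ k)), fun k => htpos _, ?_, ?_, ?_⟩,
    mem_closedBall_zero_iff.1 ha⟩
  · exact htlim.comp ((tendsto_add_atTop_nat N).comp hφ.tendsto_atTop)
  · exact tendsto_const_nhds.prodMk_nhds hlim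
  · exact fun k => hvS (φ k)

/-- Under the Aubin property with constant `κ`, the inner norms of the graphical derivatives at
nearby points of the graph are bounded by `κ`. -/
theorem AubinWith.eventually_innerNormSV_gDeriv_le [ProperSpace E] {S : F → Set E} {ybar : F}
    {xbar : E} {κ : ℝ≥0} (h : AubinWith κ S ybar xbar) :
    ∀ᶠ q in 𝓝[svGraph S] (ybar, xbar), innerNormSV (gDeriv S q.1 q.2) ≤ κ := by
  obtain ⟨V, hV, U, hU, hVU⟩ := h
  have hnear : ∀ᶠ q in 𝓝[svGraph S] (ybar, xbar), V ∈ 𝓝 q.1 ∧ q.2 ∈ U :=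
    nhdsWithin_le_nhds (Eventually.prodMk_nhds (eventually_mem_nhds_iff.2 hV) hU)
  filter_upwards [hnear, self_mem_nhdsWithin] with ⟨y, x⟩ ⟨hyV, hxU⟩ hxS
  refine iSup₂_le fun u hu => ?_
  have hcont : Tendsto (fun t : ℝ => y + t • u) (𝓝[>] 0) (𝓝 y) := by
    have : Continuous fun t : ℝ => y + t • u := by fun_prop
    simpa using (this.tendsto 0).mono_left nhdsWithin_le_nhds
  obtain ⟨v, hv, hvκ⟩ : ∃ v ∈ gDeriv S y x u, ‖v‖ ≤ κ := by
    apply exists_mem_gDeriv_norm_le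
    filter_upwards [hcont.eventually hyV, self_mem_nhdsWithin] with t htV ht
    have ht : 0 < t := ht
    obtain ⟨x', hx', hxx'⟩ := hVU _ htV y (mem_of_mem_nhds hyV) x ⟨hxS, hxU⟩
    refine ⟨t⁻¹ • (x' - x), ?_, by simpa [smul_smul, ht.ne'] using hx'⟩
    rw [add_sub_cancel_left, norm_smul, Real.norm_of_nonneg ht.le, norm_sub_rev] at hxx'
    rw [norm_smul, norm_inv, Real.norm_of_nonneg ht.le, inv_mul_le_iff₀ ht]
    calc ‖x' - x‖ ≤ κ * (t * ‖u‖) := hxx'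
      _ ≤ κ * (t * 1) := by gcongr
      _ = t * κ := by ring
  exact (iInf₂_le v hv).trans (by exact_mod_cast hvκ)

/-- A derivative `v ∈ DS(z|w)(u)` in the unit direction `u` from `z` to `y` with `‖v‖ < κ` gives
a graph point whose first component is closer to `y`, at a cost of at most `κ` times the gain. -/
theorem exists_mem_svGraph_closer {S : F → Set E} {y z : F} {w v : E} {κ : ℝ} (hz : z ≠ y)
    (hv : v ∈ gDeriv S z w (‖y - z‖⁻¹ • (y - z))) (hvκ : ‖v‖ < κ) :
    ∃ p ∈ svGraph S, ‖y - p.1‖ < ‖y - z‖ ∧ ‖p.2 - w‖ ≤ κ * (‖y - z‖ - ‖y - p.1‖) := by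
  obtain ⟨t, q, htpos, htlim, hq, hmem⟩ := hv
  set d := ‖y - z‖ with hd
  have hdpos : 0 < d := norm_pos_iff.2 (sub_ne_zero.2 hz.symm)
  set u := d⁻¹ • (y - z) with hu
  have hyz : y - z = d • u := by rw [hu, smul_smul, mul_inv_cancel₀ hdpos.ne', one_smul]
  have hunorm : ‖u‖ = 1 := by
    rw [hu, norm_smul, norm_inv, Real.norm_of_nonneg hdpos.le, ← hd, inv_mul_cancel₀ hdpos.ne']
  have hq1 : Tendsto (fun k => ‖(q k).1 - u‖) atTop (𝓝 0) := by
    simpa using (((continuous_fst.tendsto _).comp hq).sub_const u).norm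
  have hq2 : Tendsto (fun k => ‖(q k).2‖) atTop (𝓝 ‖v‖) :=
    ((continuous_snd.tendsto _).comp hq).norm
  have hκ : Tendsto (fun k => κ * (1 - ‖(q k).1 - u‖)) atTop (𝓝 κ) := by
    simpa using (hq1.const_sub 1).const_mul κ
  obtain ⟨k, hk1, hk2, hkt⟩ := ((hq1.eventually_lt_const one_pos).and
    ((hq2.eventually_lt hκ hvκ).and (htlim.eventually_lt_const hdpos))).exists
  have htk := htpos k
  have hκpos : 0 ≤ κ := (norm_nonneg v).trans hvκ.le
  have hstep : ‖y - (z + t k • (q k).1)‖ ≤ d - t k * (1 - ‖(q k).1 - u‖) := by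
    have heq : y - (z + t k • (q k).1) = (d - t k) • u - t k • ((q k).1 - u) := by
      rw [← sub_sub, hyz]; module
    rw [heq]
    refine (norm_sub_le _ _).trans (le_of_eq ?_)
    rw [norm_smul (d - t k), norm_smul (t k), hunorm, Real.norm_of_nonneg htk.le,
      Real.norm_of_nonneg (sub_pos.2 hkt).le]
    ring
  refine ⟨(z, w) + t k • q k, hmem k, ?_, ?_⟩
  · have := mul_pos htk (sub_pos.2 hk1)
    exact hstep.trans_lt (by linarith)
  · have hnorm : ‖((z, w) + t k • q k).2 - w‖ = t k * ‖(q k).2‖ := by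
      simp [norm_smul, abs_of_pos htk]
    rw [hnorm]
    calc t k * ‖(q k).2‖ ≤ t k * (κ * (1 - ‖(q k).1 - u‖)) := by gcongr
      _ = κ * (d - (d - t k * (1 - ‖(q k).1 - u‖))) := by ring
      _ ≤ κ * (d - ‖y - (z + t k • (q k).1)‖) := by gcongr

/-- If the graph is locally closed and the inner norms of the graphical derivatives at nearby
points of the graph are smaller than `κ`, then the Aubin property holds with constant `κ`. -/
theorem AubinWith.of_eventually_innerNormSV_gDeriv_lt [ProperSpace F] [ProperSpace E]
    {S : F → Set E} {ybar : F} {xbar : E} {κ : ℝ≥0} (hloc : LocClosedAt (svGraph S) (ybar, xbar))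
    (h : ∀ᶠ q in 𝓝[svGraph S] (ybar, xbar), innerNormSV (gDeriv S q.1 q.2) < κ) :
    AubinWith κ S ybar xbar := by
  obtain ⟨r₀, hr₀, hclosed₀⟩ := hloc
  obtain ⟨ρ, hρ, hball⟩ := Metric.eventually_nhds_iff_ball.1 (eventually_nhdsWithin_iff.1 h)
  set r := min r₀ (ρ / 2)
  have hrpos : 0 < r := lt_min hr₀ (half_pos hρ)
  have hderiv : ∀ p ∈ closedBall (ybar, xbar) r, p ∈ svGraph S →
      innerNormSV (gDeriv S p.1 p.2) < κ := fun p hp =>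
    hball p (closedBall_subset_ball ((min_le_right _ _).trans_lt (half_lt_self hρ)) hp)
  have hcompact : IsCompact (svGraph S ∩ closedBall (ybar, xbar) r) := by
    refine (isCompact_closedBall (ybar, xbar) r).of_isClosed_subset ?_ inter_subset_right
    rw [← inter_eq_right.2 (closedBall_subset_closedBall (min_le_left r₀ (ρ / 2))), ← inter_assoc]
    exact hclosed₀.inter isClosed_closedBall
  set δ := r / (3 + 2 * κ)
  have hκ : (0 : ℝ) ≤ κ := κ.2
  have hδpos : 0 < δ := by positivity
  have hδr : δ * (3 + 2 * κ) = r := div_mul_cancel₀ _ (by positivity)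
  refine ⟨ball ybar δ, ball_mem_nhds _ hδpos, ball xbar δ, ball_mem_nhds _ hδpos, ?_⟩
  rintro y hy y' hy' x ⟨hxS, hxU⟩
  rw [mem_ball_iff_norm] at hy hy' hxU
  set D := ‖y - y'‖ with hD
  have hD2 : D ≤ 2 * δ := by
    have := norm_sub_le_norm_sub_add_norm_sub y ybar y'
    rw [norm_sub_rev ybar y'] at this
    linarith
  have hκD : κ * D ≤ κ * (2 * δ) := by gcongr
  have hmem : ∀ p : F × E, ‖p.2 - x‖ ≤ κ * (D - ‖y - p.1‖) → ‖y - p.1‖ ≤ D →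
      p ∈ closedBall (ybar, xbar) r := by
    intro p hp hpD
    have hκp : 0 ≤ κ * ‖y - p.1‖ := by positivity
    have h1 := norm_sub_le_norm_sub_add_norm_sub p.1 y ybar
    have h2 := norm_sub_le_norm_sub_add_norm_sub p.2 x xbar
    have hκδ : 0 ≤ κ * δ := by positivity
    rw [norm_sub_rev p.1 y] at h1
    rw [mem_closedBall_iff_norm, Prod.norm_def]
    refine max_le ?_ ?_
    · show ‖p.1 - ybar‖ ≤ r
      linarith
    · show ‖p.2 - xbar‖ ≤ r
      linarith
  have hAcompact : IsCompact ((svGraph S ∩ closedBall (ybar, xbar) r) ∩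
      {p : F × E | ‖p.2 - x‖ ≤ κ * (D - ‖y - p.1‖) ∧ ‖y - p.1‖ ≤ D}) := by
    refine hcompact.inter_right (IsClosed.and ?_ ?_)
    · exact isClosed_le (by fun_prop) (by fun_prop)
    · exact isClosed_le (by fun_prop) (by fun_prop)
  have hstart : ‖x - x‖ ≤ κ * (D - ‖y - y'‖) ∧ ‖y - y'‖ ≤ D := by simp [hD]
  obtain ⟨⟨z, w⟩, ⟨⟨hzS, hzball⟩, hzx, hzD⟩, hmin⟩ := hAcompact.exists_isMinOn
    ⟨(y', x), ⟨hxS, hmem (y', x) hstart.1 hstart.2⟩, hstart⟩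
    (f := fun p : F × E => ‖y - p.1‖) (by fun_prop)
  dsimp only at hzx hzD
  by_cases hzy : z = y
  · subst hzy
    refine ⟨w, hzS, ?_⟩
    rw [norm_sub_rev]
    simpa using hzx
  exfalso
  have hunit : ‖‖y - z‖⁻¹ • (y - z)‖ ≤ 1 := by
    rw [norm_smul, norm_inv, norm_norm]
    exact inv_mul_le_one
  obtain ⟨v, hv, hvκ⟩ := exists_mem_norm_lt_of_innerNormSV_lt (hderiv _ hzball hzS) hunit
  obtain ⟨p, hpS, hplt, hpw⟩ := exists_mem_svGraph_closer hzy hv hvκ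
  have hpx : ‖p.2 - x‖ ≤ κ * (D - ‖y - p.1‖) := by
    have := norm_sub_le_norm_sub_add_norm_sub p.2 w x
    linarith
  have hpD : ‖y - p.1‖ ≤ D := hplt.le.trans hzD
  exact (isMinOn_iff.1 hmin p ⟨⟨hpS, hmem p hpx hpD⟩, hpx, hpD⟩).not_gt hplt

/-- The Lipschitz modulus is the limsup of the inner norms of the graphical derivatives. -/
theorem lipMod_eq_limsup_innerNormSV_gDeriv [ProperSpace F] [ProperSpace E]
    {S : F → Set E} {ybar : F} {xbar : E} (hloc : LocClosedAt (svGraph S) (ybar, xbar)) :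
    lipMod S ybar xbar = limsup (fun q : F × E => innerNormSV (gDeriv S q.1 q.2))
      (𝓝[svGraph S] (ybar, xbar)) := by
  refine le_antisymm (le_of_forall_gt fun c hc => ?_) ?_
  · obtain ⟨κ, hκ, hκc⟩ := ENNReal.lt_iff_exists_nnreal_btwn.1 hc
    have hA : AubinWith κ S ybar xbar :=
      .of_eventually_innerNormSV_gDeriv_lt hloc (eventually_lt_of_limsup_lt hκ)
    exact (biInf_le (fun κ : ℝ≥0 => (κ : ℝ≥0∞)) hA).trans_lt hκc
  · rw [lipMod]
    refine le_iInf₂ fun κ hκ => ?_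
    exact limsup_le_of_le (h := hκ.eventually_innerNormSV_gDeriv_le)

end Criterion

/-- Graphical derivative criterion for the Aubin property:
`lip (S; ybar|xbar)` equals the limsup of `|DS(y|x)|⁻` over the graph. -/
theorem gDeriv_criterion_for_aubin {n m : ℕ}
    (S : EuclideanSpace ℝ (Fin m) → Set (EuclideanSpace ℝ (Fin n)))
    (ybar : EuclideanSpace ℝ (Fin m)) (xbar : EuclideanSpace ℝ (Fin n))
    (hgr : xbar ∈ S ybar) (hloc : LocClosedAt (svGraph S) (ybar, xbar)) :
    lipMod S ybar xbar = Filter.limsup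
        (fun q : EuclideanSpace ℝ (Fin m) × EuclideanSpace ℝ (Fin n) =>
          innerNormSV (gDeriv S q.1 q.2))
        (𝓝[svGraph S] (ybar, xbar)) ∧
    ((∃ κ : ℝ≥0, AubinWith κ S ybar xbar) ↔
      Filter.limsup
        (fun q : EuclideanSpace ℝ (Fin m) × EuclideanSpace ℝ (Fin n) =>
          innerNormSV (gDeriv S q.1 q.2))
        (𝓝[svGraph S] (ybar, xbar)) < ⊤) := by
  have hlip := lipMod_eq_limsup_innerNormSV_gDeriv hloc
  exact ⟨hlip, hlip ▸ exists_aubinWith_iff_lipMod_lt_top⟩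

end
end
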